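/- arXiv:2001.02753 — 3 statements merged into one kernel-verified Lean document; each statement's English description precedes it below -/
import Mathlib

section
/- Let A : ℝ² → ℝ^{n×n} be a C² family of real symmetric matrices with a non-degenerate conical point at α between λ₁ and λ₂, and let B^r denote the 2×2 block of the diagonalized-at-r block decomposition Γ(r')ᵀA^r(r')Γ(r') = B^r(r') ⊕ Λ(r') near α. Then there is a neighborhood of α and a constant c > 0 on which both J_r(B^r) and J_r(Ã^r) are invertible and ‖J_r(B^r)⁻¹ − J_r(Ã^r)⁻¹‖ ≤ c |λ₂(r) − λ₁(r)|, where the Jacobians are evaluated at the same point r at which both B^r and Ã^r are diagonal. -/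
noncomputable section
open Matrix

/-- Partial derivative in the `x` direction. -/
def pdx {E : Type*} [NormedAddCommGroup E] [NormedSpace ℝ E] (f : ℝ × ℝ → E) (r : ℝ × ℝ) : E :=
  fderiv ℝ f r (1, 0)

/-- Partial derivative in the `y` direction. -/
def pdy {E : Type*} [NormedAddCommGroup E] [NormedSpace ℝ E] (f : ℝ × ℝ → E) (r : ℝ × ℝ) : E :=
  fderiv ℝ f r (0, 1)

/-- The target function `F(S) = (S₁₁ − S₂₂, 2 S₁₂)` of a 2×2 matrix family. -/
def Ftar (S : ℝ × ℝ → Matrix (Fin 2) (Fin 2) ℝ) (r : ℝ × ℝ) : ℝ × ℝ :=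
  (S r 0 0 - S r 1 1, 2 * S r 0 1)

/-- The Jacobian `J_r(S) = D_r F(S)` of the target function. -/
def Jmat (S : ℝ × ℝ → Matrix (Fin 2) (Fin 2) ℝ) (r : ℝ × ℝ) : Matrix (Fin 2) (Fin 2) ℝ :=
  !![pdx (fun p => S p 0 0 - S p 1 1) r, pdy (fun p => S p 0 0 - S p 1 1) r;
     pdx (fun p => 2 * S p 0 1) r, pdy (fun p => 2 * S p 0 1) r]

/-- Action of a 2×2 matrix on `ℝ × ℝ`. -/
def mulVec2 (M : Matrix (Fin 2) (Fin 2) ℝ) (v : ℝ × ℝ) : ℝ × ℝ :=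
  (M 0 0 * v.1 + M 0 1 * v.2, M 1 0 * v.1 + M 1 1 * v.2)

/-- The family `A` expressed in the constant basis `v₁, v₂`:
the 2×2 matrix `Ã(r) = (⟨vᵢ, A(r) vⱼ⟩)`. -/
def tildeA {n : ℕ} (A : ℝ × ℝ → Matrix (Fin n) (Fin n) ℝ) (v₁ v₂ : Fin n → ℝ) :
    ℝ × ℝ → Matrix (Fin 2) (Fin 2) ℝ := fun r =>
  !![v₁ ⬝ᵥ (A r).mulVec v₁, v₁ ⬝ᵥ (A r).mulVec v₂;
     v₂ ⬝ᵥ (A r).mulVec v₁, v₂ ⬝ᵥ (A r).mulVec v₂]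

/-- The discriminant of a 2×2 symmetric matrix family. -/
def discB (B : ℝ × ℝ → Matrix (Fin 2) (Fin 2) ℝ) (r : ℝ × ℝ) : ℝ :=
  (B r 0 0 - B r 1 1) ^ 2 + 4 * (B r 0 1) ^ 2

/-- The Hessian (matrix of second partial derivatives) of `g : ℝ² → ℝ`. -/
def Hess2 (g : ℝ × ℝ → ℝ) (α : ℝ × ℝ) : Matrix (Fin 2) (Fin 2) ℝ :=
  !![pdx (fun r => pdx g r) α, pdx (fun r => pdy g r) α;
     pdy (fun r => pdx g r) α, pdy (fun r => pdy g r) α]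

/-- The upper-left 2×2 block of an `n×n` matrix family (`2 < n`). -/
def topBlock {n : ℕ} (hn : 2 < n) (C : ℝ × ℝ → Matrix (Fin n) (Fin n) ℝ) :
    ℝ × ℝ → Matrix (Fin 2) (Fin 2) ℝ := fun r =>
  !![C r ⟨0, by omega⟩ ⟨0, by omega⟩, C r ⟨0, by omega⟩ ⟨1, by omega⟩;
     C r ⟨1, by omega⟩ ⟨0, by omega⟩, C r ⟨1, by omega⟩ ⟨1, by omega⟩]

/-!
Let `N` be the frame formed by the first two columns of `M`, so that `A N = N B` and `B = Nᵀ A N`.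
Differentiating this product at `r` gives the derivative of the compression of `A` to the frozen
frame `N(r)`, plus the commutator of `B(r)` with the connection form `Nᵀ dN`, which is
antisymmetric. In target coordinates the commutator is the vector `F(B)(r)` rotated by a right angle
and multiplied by a bounded factor, and `F(B)(r)` has length `|λ₂(r) − λ₁(r)|`. So the two Jacobians
differ by `O(|λ₂ − λ₁|)` and, having the same invertible limit at `α`, so do their inverses. The
constant matrix `W` multiplies both Jacobians on the left by one and the same orthogonal matrix,
which makes the estimate uniform in `W`.
-/

open Filter Topology Asymptotics

section Frames

variable {R ι κ τ : Type*} [CommRing R] [Fintype ι]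

theorem transpose_submatrix_mul_submatrix_eq_one [DecidableEq ι] [DecidableEq κ] {e : κ → ι}
    (he : e.Injective) {M : Matrix ι ι R} (hM : Mᵀ * M = 1) :
    (M.submatrix id e)ᵀ * M.submatrix id e = 1 := by
  change (Mᵀ * M).submatrix e e = 1
  rw [hM, submatrix_one e he]

theorem transpose_mul_self_of_pair {w₁ w₂ : ι → R} (h₁ : w₁ ⬝ᵥ w₁ = 1)
    (h₂ : w₂ ⬝ᵥ w₂ = 1) (h₁₂ : w₁ ⬝ᵥ w₂ = 0) : ((of ![w₁, w₂])ᵀ)ᵀ * (of ![w₁, w₂])ᵀ = 1 := by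
  ext i j
  fin_cases i <;> fin_cases j
  exacts [h₁, h₁₂, (dotProduct_comm w₂ w₁).trans h₁₂, h₂]

theorem mul_pair_eq_smul {C : Matrix ι ι R} {μ : R} {w₁ w₂ : ι → R}
    (h₁ : C *ᵥ w₁ = μ • w₁) (h₂ : C *ᵥ w₂ = μ • w₂) :
    C * (of ![w₁, w₂])ᵀ = μ • (of ![w₁, w₂])ᵀ := by
  ext i j
  fin_cases j
  exacts [congrFun h₁ i, congrFun h₂ i]

variable [Fintype κ]

theorem mul_eq_submatrix_mul_submatrix {e : κ → ι} (he : e.Injective) (X : Matrix τ ι R)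
    {ν : Type*} {Y : Matrix ι ν R} (hY : ∀ i ∉ Set.range e, ∀ j, Y i j = 0) :
    X * Y = X.submatrix id e * Y.submatrix e id := by
  ext i j
  simp only [Matrix.mul_apply, submatrix_apply, id_eq]
  exact (Fintype.sum_of_injective e he _ _ (fun k hk => by rw [hY k hk j, mul_zero])
    fun _ => rfl).symm

section Compression

variable [DecidableEq κ]

theorem block_eq_compression {A : Matrix ι ι R} {N : Matrix ι κ R} {B : Matrix κ κ R}
    (hN : Nᵀ * N = 1) (hAN : A * N = N * B) : B = Nᵀ * A * N := by
  rw [Matrix.mul_assoc, hAN, ← Matrix.mul_assoc, hN, Matrix.one_mul]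

theorem block_transpose {A : Matrix ι ι R} {N : Matrix ι κ R} {B : Matrix κ κ R}
    (hA : Aᵀ = A) (hN : Nᵀ * N = 1) (hAN : A * N = N * B) : Bᵀ = B := by
  rw [block_eq_compression hN hAN]
  simp only [transpose_mul, transpose_transpose, hA, Matrix.mul_assoc]

end Compression

variable [DecidableEq ι]

theorem mul_submatrix_of_block {e : κ → ι} (he : e.Injective) {A M : Matrix ι ι R}
    (hM : Mᵀ * M = 1) (hoff : ∀ i ∉ Set.range e, ∀ j, (Mᵀ * A * M) i (e j) = 0) :
    A * M.submatrix id e = M.submatrix id e * (Mᵀ * A * M).submatrix e e := by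
  have hAM : A * M = M * (Mᵀ * A * M) := by
    rw [← Matrix.mul_assoc, ← Matrix.mul_assoc, mul_eq_one_comm.mp hM, Matrix.one_mul]
  calc A * M.submatrix id e = M * (Mᵀ * A * M).submatrix id e := by
        ext i j
        exact congrFun (congrFun hAM i) (e j)
    _ = M.submatrix id e * (Mᵀ * A * M).submatrix e e :=
        mul_eq_submatrix_mul_submatrix he M hoff

theorem submatrix_mul_transpose_mul_of_eigen [IsDomain R] {e : κ → ι} (he : e.Injective)
    {A V : Matrix ι ι R} {d : ι → R} (hV : Vᵀ * V = 1) (hA : A = V * diagonal d * Vᵀ) {μ : R}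
    (hd : ∀ i ∉ Set.range e, d i ≠ μ) {X : Matrix ι τ R} (hX : A * X = μ • X) :
    V.submatrix id e * ((V.submatrix id e)ᵀ * X) = X := by
  have hcoord : diagonal d * (Vᵀ * X) = μ • (Vᵀ * X) := by
    rw [← Matrix.mul_smul, ← hX, hA]
    simp only [← Matrix.mul_assoc, hV, Matrix.one_mul]
  have hzero (i : ι) (hi : i ∉ Set.range e) (j : τ) : (Vᵀ * X) i j = 0 := by
    have h := congrFun (congrFun hcoord i) j
    rw [diagonal_mul, Matrix.smul_apply, smul_eq_mul] at h
    exact (mul_eq_mul_right_iff.mp h).resolve_left (hd i hi)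
  calc V.submatrix id e * ((V.submatrix id e)ᵀ * X) = V * (Vᵀ * X) :=
        (mul_eq_submatrix_mul_submatrix he V hzero).symm
    _ = X := by rw [← Matrix.mul_assoc, mul_eq_one_comm.mp hV, Matrix.one_mul]

variable [DecidableEq κ]

theorem exists_orthogonal_of_eigenframes [IsDomain R] {e : κ → ι} (he : e.Injective)
    {A V : Matrix ι ι R} {d : ι → R} (hV : Vᵀ * V = 1) (hA : A = V * diagonal d * Vᵀ) {μ : R}
    (hd : ∀ i ∉ Set.range e, d i ≠ μ) {X Y : Matrix ι κ R} (hX : A * X = μ • X)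
    (hY : A * Y = μ • Y) (hXX : Xᵀ * X = 1) (hYY : Yᵀ * Y = 1) :
    ∃ U : Matrix κ κ R, Uᵀ * U = 1 ∧ Y = X * U := by
  set F := V.submatrix id e
  have hFX : F * (Fᵀ * X) = X := submatrix_mul_transpose_mul_of_eigen he hV hA hd hX
  have hFY : F * (Fᵀ * Y) = Y := submatrix_mul_transpose_mul_of_eigen he hV hA hd hY
  have hP : (Fᵀ * X) * (Fᵀ * X)ᵀ = 1 := mul_eq_one_comm.mp <| by
    rw [transpose_mul, transpose_transpose, Matrix.mul_assoc, hFX, hXX]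
  have hXU : Y = X * (Xᵀ * Y) := by
    calc Y = F * ((Fᵀ * X) * (Fᵀ * X)ᵀ * (Fᵀ * Y)) := by rw [hP, Matrix.one_mul, hFY]
      _ = F * (Fᵀ * X) * (Xᵀ * (F * (Fᵀ * Y))) := by
          simp only [transpose_mul, transpose_transpose, Matrix.mul_assoc]
      _ = X * (Xᵀ * Y) := by rw [hFX, hFY]
  refine ⟨Xᵀ * Y, ?_, hXU⟩
  rw [transpose_mul, transpose_transpose, Matrix.mul_assoc, ← hXU, hYY]

end Frames

section EntryDeriv

variable {𝕜 E : Type*} [NontriviallyNormedField 𝕜] [NormedAddCommGroup E] [NormedSpace 𝕜 E]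
  {ι κ τ : Type*}

theorem continuousAt_fderiv_apply {f : E → 𝕜} {r : E} (hf : ContDiffAt 𝕜 1 f r) (e : E) :
    ContinuousAt (fun p => fderiv 𝕜 f p e) r :=
  (hf.continuousAt_fderiv one_ne_zero).clm_apply continuousAt_const

/-- The derivative at `r` in the direction `e` of a matrix-valued function, taken entry by entry
so that no norm on matrices has to be chosen. -/
def entryDeriv (S : E → Matrix ι κ 𝕜) (r e : E) : Matrix ι κ 𝕜 :=
  Matrix.of fun i j => fderiv 𝕜 (fun p => S p i j) r e

theorem entryDeriv_congr {S T : E → Matrix ι κ 𝕜} {r : E} (h : S =ᶠ[𝓝 r] T) (e : E) :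
    entryDeriv S r e = entryDeriv T r e := by
  ext i j
  have hij : (fun p => S p i j) =ᶠ[𝓝 r] fun p => T p i j :=
    h.mono fun p hp => congrArg (fun X : Matrix ι κ 𝕜 => X i j) hp
  exact congrArg (fun L : E →L[𝕜] 𝕜 => L e) hij.fderiv_eq

theorem entryDeriv_const (X : Matrix ι κ 𝕜) (r e : E) : entryDeriv (fun _ => X) r e = 0 := by
  ext i j
  simp [entryDeriv]

theorem entryDeriv_transpose (S : E → Matrix ι κ 𝕜) (r e : E) :
    entryDeriv (fun p => (S p)ᵀ) r e = (entryDeriv S r e)ᵀ :=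
  rfl

variable [Fintype κ] {X : E → Matrix ι κ 𝕜} {Y : E → Matrix κ τ 𝕜} {r : E}

theorem differentiableAt_mul_apply (hX : ∀ i j, DifferentiableAt 𝕜 (fun p => X p i j) r)
    (hY : ∀ i j, DifferentiableAt 𝕜 (fun p => Y p i j) r) (i : ι) (j : τ) :
    DifferentiableAt 𝕜 (fun p => (X p * Y p) i j) r :=
  DifferentiableAt.fun_sum fun k _ => (hX i k).mul (hY k j)

theorem contDiffOn_mul_apply {s : Set E} {k : WithTop ℕ∞}
    (hX : ∀ i j, ContDiffOn 𝕜 k (fun p => X p i j) s)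
    (hY : ∀ i j, ContDiffOn 𝕜 k (fun p => Y p i j) s) (i : ι) (j : τ) :
    ContDiffOn 𝕜 k (fun p => (X p * Y p) i j) s :=
  ContDiffOn.sum fun k _ => (hX i k).mul (hY k j)

theorem entryDeriv_mul (hX : ∀ i j, DifferentiableAt 𝕜 (fun p => X p i j) r)
    (hY : ∀ i j, DifferentiableAt 𝕜 (fun p => Y p i j) r) (e : E) :
    entryDeriv (fun p => X p * Y p) r e =
      entryDeriv X r e * Y r + X r * entryDeriv Y r e := by
  ext i j
  have h := HasFDerivAt.fun_sum (u := Finset.univ)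
    fun k _ => (hX i k).hasFDerivAt.fun_mul (hY k j).hasFDerivAt
  have hsum : fderiv 𝕜 (fun p => (X p * Y p) i j) r = _ := h.fderiv
  rw [entryDeriv, of_apply, hsum]
  simp only [entryDeriv, of_apply, Matrix.add_apply, Matrix.mul_apply, _root_.sum_apply,
    _root_.add_apply, _root_.smul_apply, smul_eq_mul, ← Finset.sum_add_distrib]
  exact Finset.sum_congr rfl fun k _ => by ring

variable {κ' : Type*} [Fintype κ'] {S : E → Matrix κ κ' 𝕜}

theorem differentiableAt_const_mul_mul_const_apply
    (hS : ∀ i j, DifferentiableAt 𝕜 (fun p => S p i j) r)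
    (P : Matrix ι κ 𝕜) (Q : Matrix κ' τ 𝕜) (i : ι) (j : τ) :
    DifferentiableAt 𝕜 (fun p => (P * S p * Q) i j) r := by
  have hP (i j) : DifferentiableAt 𝕜 (fun _ : E => P i j) r := differentiableAt_const _
  have hQ (i j) : DifferentiableAt 𝕜 (fun _ : E => Q i j) r := differentiableAt_const _
  exact differentiableAt_mul_apply (differentiableAt_mul_apply hP hS) hQ i j

theorem entryDeriv_const_mul_mul_const
    (hS : ∀ i j, DifferentiableAt 𝕜 (fun p => S p i j) r)
    (P : Matrix ι κ 𝕜) (Q : Matrix κ' τ 𝕜) (e : E) :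
    entryDeriv (fun p => P * S p * Q) r e = P * entryDeriv S r e * Q := by
  have hP (i j) : DifferentiableAt 𝕜 (fun _ : E => P i j) r := differentiableAt_const _
  have hQ (i j) : DifferentiableAt 𝕜 (fun _ : E => Q i j) r := differentiableAt_const _
  rw [entryDeriv_mul (differentiableAt_mul_apply hP hS) hQ, entryDeriv_mul hP hS]
  simp only [entryDeriv_const, Matrix.zero_mul, Matrix.mul_zero, zero_add, add_zero]

end EntryDeriv

section Connection

variable {E : Type*} [NormedAddCommGroup E] [NormedSpace ℝ E] {ι κ : Type*} [Fintype ι]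

/-- The connection form `NᵀdN` of a moving frame `N` (whose columns are the frame vectors), at `r`
in the direction `e`. -/
def connectionForm (N : E → Matrix ι κ ℝ) (r e : E) : Matrix κ κ ℝ :=
  (N r)ᵀ * entryDeriv N r e

variable [DecidableEq κ] {N : E → Matrix ι κ ℝ} {r : E}

theorem transpose_connectionForm (hN : ∀ i j, DifferentiableAt ℝ (fun p => N p i j) r)
    (horth : ∀ᶠ p in 𝓝 r, (N p)ᵀ * N p = 1) (e : E) :
    (connectionForm N r e)ᵀ = -connectionForm N r e := by
  have h : entryDeriv (fun p => (N p)ᵀ * N p) r e = 0 :=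
    (entryDeriv_congr horth e).trans (entryDeriv_const 1 r e)
  have hNt (i j) : DifferentiableAt ℝ (fun p => (N p)ᵀ i j) r := hN j i
  rw [entryDeriv_mul hNt hN, entryDeriv_transpose] at h
  rw [connectionForm, transpose_mul, transpose_transpose]
  exact eq_neg_of_add_eq_zero_left h

-- Invariance moves `A` off the derivative of the frame, and antisymmetry of the connection form
-- turns the two frame terms of the product rule into a commutator.
theorem entryDeriv_compression [Fintype κ] {A : E → Matrix ι ι ℝ} {B : Matrix κ κ ℝ}
    (hA : ∀ i j, DifferentiableAt ℝ (fun p => A p i j) r) (hAsym : (A r)ᵀ = A r)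
    (hN : ∀ i j, DifferentiableAt ℝ (fun p => N p i j) r)
    (horth : ∀ᶠ p in 𝓝 r, (N p)ᵀ * N p = 1) (hAN : A r * N r = N r * B) (e : E) :
    entryDeriv (fun p => (N p)ᵀ * A p * N p) r e =
      entryDeriv (fun p => (N r)ᵀ * A p * N r) r e +
        (B * connectionForm N r e - connectionForm N r e * B) := by
  have hNA : (N r)ᵀ * A r = B * (N r)ᵀ := by
    have h := congrArg Matrix.transpose hAN
    rwa [transpose_mul, transpose_mul, hAsym, block_transpose hAsym horth.self_of_nhds hAN] at h
  have hNN : (entryDeriv N r e)ᵀ * N r = -connectionForm N r e := by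
    rw [← transpose_connectionForm hN horth, connectionForm, transpose_mul, transpose_transpose]
  have hNt (i j) : DifferentiableAt ℝ (fun p => (N p)ᵀ i j) r := hN j i
  calc entryDeriv (fun p => (N p)ᵀ * A p * N p) r e
      = (entryDeriv N r e)ᵀ * (A r * N r) + (N r)ᵀ * entryDeriv A r e * N r +
          (N r)ᵀ * A r * entryDeriv N r e := by
        rw [entryDeriv_mul (differentiableAt_mul_apply hNt hA) hN, entryDeriv_mul hNt hA,
          entryDeriv_transpose, Matrix.add_mul, Matrix.mul_assoc _ (A r)]
    _ = -connectionForm N r e * B + (N r)ᵀ * entryDeriv A r e * N r +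
          B * connectionForm N r e := by
        rw [hAN, ← Matrix.mul_assoc _ (N r), hNN, hNA, Matrix.mul_assoc B, ← connectionForm]
    _ = entryDeriv (fun p => (N r)ᵀ * A p * N r) r e +
          (B * connectionForm N r e - connectionForm N r e * B) := by
        rw [entryDeriv_const_mul_mul_const hA, Matrix.neg_mul]
        abel

end Connection

section Target

/-- The two coordinate directions of `ℝ × ℝ`, indexed as the columns of `Jmat`. -/
def coordDir : Fin 2 → ℝ × ℝ :=
  ![(1, 0), (0, 1)]

/-- The target coordinates `(X₁₁ − X₂₂, 2 X₁₂)` of a single matrix: the pointwise version of `Ftar`,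
as a vector indexed by `Fin 2` on which matrices act by `*ᵥ`. -/
def targetVec (X : Matrix (Fin 2) (Fin 2) ℝ) : Fin 2 → ℝ :=
  ![X 0 0 - X 1 1, 2 * X 0 1]

/-- The matrix by which conjugation with an orthogonal `W` acts on target coordinates. -/
def targetConj (W : Matrix (Fin 2) (Fin 2) ℝ) : Matrix (Fin 2) (Fin 2) ℝ :=
  !![W 0 0 ^ 2 - W 0 1 ^ 2, W 0 0 * W 1 0 - W 0 1 * W 1 1;
     2 * (W 0 0 * W 0 1), W 0 0 * W 1 1 + W 0 1 * W 1 0]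

theorem orthogonal_fin_two {W : Matrix (Fin 2) (Fin 2) ℝ} (hW : Wᵀ * W = 1) :
    W 0 0 ^ 2 + W 1 0 ^ 2 = 1 ∧ W 0 1 ^ 2 + W 1 1 ^ 2 = 1 ∧ W 0 0 * W 0 1 + W 1 0 * W 1 1 = 0 := by
  have h (i j : Fin 2) : W 0 i * W 0 j + W 1 i * W 1 j = (1 : Matrix (Fin 2) (Fin 2) ℝ) i j := by
    rw [← hW, Matrix.mul_apply, Fin.sum_univ_two]
    rfl
  refine ⟨?_, ?_, h 0 1⟩
  · simpa only [sq, one_apply_eq] using h 0 0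
  · simpa only [sq, one_apply_eq] using h 1 1

theorem targetVec_conj {W X : Matrix (Fin 2) (Fin 2) ℝ} (hW : Wᵀ * W = 1) (hX : Xᵀ = X) :
    targetVec (Wᵀ * X * W) = targetConj W *ᵥ targetVec X := by
  obtain ⟨h₀, h₁, h₀₁⟩ := orthogonal_fin_two hW
  have hX₁₀ : X 1 0 = X 0 1 := congrFun (congrFun hX 0) 1
  ext i
  fin_cases i <;>
    simp [targetVec, targetConj, Matrix.mul_apply, Fin.sum_univ_two, vecHead, vecTail, hX₁₀]
  · linear_combination X 1 1 * (h₀ - h₁)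
  · linear_combination 2 * X 1 1 * h₀₁

theorem targetConj_orthogonal {W : Matrix (Fin 2) (Fin 2) ℝ} (hW : Wᵀ * W = 1) :
    (targetConj W)ᵀ * targetConj W = 1 := by
  obtain ⟨k₀, k₁, k₀₁⟩ := orthogonal_fin_two (W := Wᵀ) (mul_eq_one_comm.mp hW)
  simp only [transpose_apply] at k₀ k₁ k₀₁
  ext i j
  fin_cases i <;> fin_cases j <;> simp [targetConj, Matrix.mul_apply, Fin.sum_univ_two]
  · linear_combination (W 0 0 ^ 2 + W 0 1 ^ 2 + 1) * k₀
  · linear_combination (W 0 0 ^ 2 + W 0 1 ^ 2) * k₀₁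
  · linear_combination (W 0 0 ^ 2 + W 0 1 ^ 2) * k₀₁
  · linear_combination (W 1 0 ^ 2 + W 1 1 ^ 2) * k₀ + k₁

theorem targetVec_commutator {X Ω : Matrix (Fin 2) (Fin 2) ℝ} (hX : Xᵀ = X) (hΩ : Ωᵀ = -Ω) :
    targetVec (X * Ω - Ω * X) = (2 * Ω 0 1) • ![-targetVec X 1, targetVec X 0] := by
  have hX₁₀ : X 1 0 = X 0 1 := congrFun (congrFun hX 0) 1
  have hΩ₁₀ : Ω 1 0 = -Ω 0 1 := congrFun (congrFun hΩ 0) 1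
  have hΩ₀₀ : Ω 0 0 = -Ω 0 0 := congrFun (congrFun hΩ 0) 0
  have hΩ₁₁ : Ω 1 1 = -Ω 1 1 := congrFun (congrFun hΩ 1) 1
  ext i
  fin_cases i <;> simp [targetVec, Matrix.mul_apply, Fin.sum_univ_two, hX₁₀, hΩ₁₀]
  · ring
  · linear_combination X 0 1 * (hΩ₁₁ - hΩ₀₀)

theorem targetVec_add (X Y : Matrix (Fin 2) (Fin 2) ℝ) :
    targetVec (X + Y) = targetVec X + targetVec Y := by
  ext i
  fin_cases i <;> simp [targetVec] <;> ring

theorem targetVec_sq_add_targetVec_sq {X : Matrix (Fin 2) (Fin 2) ℝ} (hX : Xᵀ = X) :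
    targetVec X 0 ^ 2 + targetVec X 1 ^ 2 = X.trace ^ 2 - 4 * X.det := by
  have hX₁₀ : X 1 0 = X 0 1 := congrFun (congrFun hX 0) 1
  simp only [targetVec, trace_fin_two, det_fin_two, hX₁₀, cons_val_zero, cons_val_one]
  ring

theorem abs_targetVec_le {X : Matrix (Fin 2) (Fin 2) ℝ} (hX : Xᵀ = X) {l₁ l₂ : ℝ}
    (htr : X.trace = l₁ + l₂) (hdet : X.det = l₁ * l₂) (i : Fin 2) :
    |targetVec X i| ≤ |l₂ - l₁| := by
  have h : targetVec X 0 ^ 2 + targetVec X 1 ^ 2 = (l₂ - l₁) ^ 2 := by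
    rw [targetVec_sq_add_targetVec_sq hX, htr, hdet]
    ring
  refine sq_le_sq.mp ?_
  fin_cases i
  · exact h ▸ le_add_of_nonneg_right (sq_nonneg _)
  · exact h ▸ le_add_of_nonneg_left (sq_nonneg _)

theorem eq_smul_one_of_trace_of_det {X : Matrix (Fin 2) (Fin 2) ℝ} (hX : Xᵀ = X) {l : ℝ}
    (htr : X.trace = l + l) (hdet : X.det = l * l) : X = l • 1 := by
  have h (i : Fin 2) : targetVec X i = 0 := by
    simpa only [sub_self, abs_zero, abs_nonpos_iff] using abs_targetVec_le hX htr hdet i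
  have hdiag : X 0 0 - X 1 1 = 0 := h 0
  have hoff : 2 * X 0 1 = 0 := h 1
  have hX₁₀ : X 1 0 = X 0 1 := congrFun (congrFun hX 0) 1
  rw [trace_fin_two] at htr
  ext i j
  fin_cases i <;> fin_cases j <;> simp <;> linarith

end Target

section Jacobian

variable {S : ℝ × ℝ → Matrix (Fin 2) (Fin 2) ℝ} {r : ℝ × ℝ}

theorem Jmat_apply (hS : ∀ i j, DifferentiableAt ℝ (fun p => S p i j) r) (i k : Fin 2) :
    Jmat S r i k = targetVec (entryDeriv S r (coordDir k)) i := by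
  have h₀ : fderiv ℝ (fun p => S p 0 0 - S p 1 1) r = _ := fderiv_fun_sub (hS 0 0) (hS 1 1)
  have h₁ : fderiv ℝ (fun p => 2 * S p 0 1) r = _ := fderiv_const_mul (hS 0 1) 2
  fin_cases i <;> fin_cases k <;> simp [Jmat, pdx, pdy, targetVec, entryDeriv, coordDir, h₀, h₁]

theorem continuousAt_Jmat (hS : ∀ i j, ContDiffAt ℝ 1 (fun p => S p i j) r) :
    ContinuousAt (Jmat S) r := by
  have h₀ : ContDiffAt ℝ 1 (fun p => S p 0 0 - S p 1 1) r := (hS 0 0).sub (hS 1 1)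
  have h₁ : ContDiffAt ℝ 1 (fun p => 2 * S p 0 1) r := contDiffAt_const.mul (hS 0 1)
  refine continuousAt_pi.mpr fun i => continuousAt_pi.mpr fun k => ?_
  fin_cases i <;> fin_cases k
  · exact continuousAt_fderiv_apply h₀ (1, 0)
  · exact continuousAt_fderiv_apply h₀ (0, 1)
  · exact continuousAt_fderiv_apply h₁ (1, 0)
  · exact continuousAt_fderiv_apply h₁ (0, 1)

theorem Jmat_conj (hS : ∀ i j, DifferentiableAt ℝ (fun p => S p i j) r)
    (hsymm : ∀ᶠ p in 𝓝 r, (S p)ᵀ = S p) {W : Matrix (Fin 2) (Fin 2) ℝ} (hW : Wᵀ * W = 1) :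
    Jmat (fun p => Wᵀ * S p * W) r = targetConj W * Jmat S r := by
  ext i k
  have hD : (entryDeriv S r (coordDir k))ᵀ = entryDeriv S r (coordDir k) :=
    (entryDeriv_transpose S r _).symm.trans (entryDeriv_congr hsymm _)
  rw [Jmat_apply (differentiableAt_const_mul_mul_const_apply hS Wᵀ W),
    entryDeriv_const_mul_mul_const hS, targetVec_conj hW hD, mulVec, dotProduct, Matrix.mul_apply]
  exact Finset.sum_congr rfl fun l _ => by rw [Jmat_apply hS]

theorem tildeA_col {n : ℕ} (A : ℝ × ℝ → Matrix (Fin n) (Fin n) ℝ) (X : Matrix (Fin n) (Fin 2) ℝ) :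
    tildeA A (X.col 0) (X.col 1) = fun p => Xᵀ * A p * X := by
  ext p i j
  rw [Matrix.mul_assoc]
  fin_cases i <;> fin_cases j <;> rfl

end Jacobian

section Inverse

variable {m β 𝕜 : Type*} [Fintype m] [DecidableEq m] [NormedField 𝕜]

theorem tendsto_matrix_inv {l : Filter β} {G : β → Matrix m m 𝕜} {L : Matrix m m 𝕜}
    (hG : Tendsto G l (𝓝 L)) (hL : L.det ≠ 0) : Tendsto (fun p => (G p)⁻¹) l (𝓝 L⁻¹) := by
  have hinv : ContinuousAt Ring.inverse L.det := by
    rw [Ring.inverse_eq_inv']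
    exact continuousAt_inv₀ hL
  exact (continuousAt_matrix_inv L hinv).tendsto.comp hG

theorem eventually_det_ne_zero {l : Filter β} {G : β → Matrix m m 𝕜} {L : Matrix m m 𝕜}
    (hG : Tendsto G l (𝓝 L)) (hL : L.det ≠ 0) : ∀ᶠ p in l, (G p).det ≠ 0 :=
  ((continuous_id.matrix_det.tendsto L).comp hG).eventually_ne hL

theorem isBigO_inv_sub_inv {l : Filter β} {G K : β → Matrix m m 𝕜} {L : Matrix m m 𝕜}
    (hG : Tendsto G l (𝓝 L)) (hK : Tendsto K l (𝓝 L)) (hL : L.det ≠ 0) {g : β → ℝ}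
    (h : ∀ i j, (fun p => G p i j - K p i j) =O[l] g) (i j : m) :
    (fun p => (G p)⁻¹ i j - (K p)⁻¹ i j) =O[l] g := by
  have hone {X : β → Matrix m m 𝕜} {Y : Matrix m m 𝕜} (hX : Tendsto X l (𝓝 Y)) (i j : m) :
      (fun p => X p i j) =O[l] fun _ => (1 : ℝ) :=
    (tendsto_pi_nhds.mp (tendsto_pi_nhds.mp hX i) j).isBigO_one ℝ
  have hinv : ∀ᶠ p in l, (G p)⁻¹ i j - (K p)⁻¹ i j =
      ∑ y, (∑ x, (G p)⁻¹ i x * (K p x y - G p x y)) * (K p)⁻¹ y j := by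
    filter_upwards [eventually_det_ne_zero hG hL, eventually_det_ne_zero hK hL] with p hGp hKp
    have hunit : IsUnit (G p) ↔ IsUnit (K p) :=
      iff_of_true ((isUnit_iff_isUnit_det _).mpr hGp.isUnit)
        ((isUnit_iff_isUnit_det _).mpr hKp.isUnit)
    exact congrFun (congrFun (Matrix.inv_sub_inv hunit) i) j
  refine IsBigO.congr' ?_ (hinv.mono fun _ hp => hp.symm) EventuallyEq.rfl
  have hKG (x y : m) : (fun p => K p x y - G p x y) =O[l] g := by
    simpa only [neg_sub] using (h x y).neg_left
  have hleft (y : m) : (fun p => ∑ x, (G p)⁻¹ i x * (K p x y - G p x y)) =O[l] g :=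
    IsBigO.fun_sum fun x _ => by
      simpa only [one_mul] using (hone (tendsto_matrix_inv hG hL) i x).mul (hKG x y)
  exact IsBigO.fun_sum fun y _ => by
    simpa only [mul_one] using (hleft y).mul (hone (tendsto_matrix_inv hK hL) y j)

theorem abs_inv_sub_inv_orthogonal_mul_le {R : Matrix m m ℝ} (hR : Rᵀ * R = 1)
    (G K : Matrix m m ℝ) (i j : m) :
    |(R * G)⁻¹ i j - (R * K)⁻¹ i j| ≤ ∑ i, ∑ k, |G⁻¹ i k - K⁻¹ i k| := by
  have hentry (k : m) : |R j k| ≤ 1 :=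
    entry_norm_bound_of_unitary (mem_unitaryGroup_iff'.mpr hR) j k
  have hdiff : (R * G)⁻¹ i j - (R * K)⁻¹ i j = ∑ k, (G⁻¹ i k - K⁻¹ i k) * R j k := by
    simp only [Matrix.mul_inv_rev, inv_eq_left_inv hR, Matrix.mul_apply, transpose_apply, sub_mul,
      Finset.sum_sub_distrib]
  calc |(R * G)⁻¹ i j - (R * K)⁻¹ i j| ≤ ∑ k, |(G⁻¹ i k - K⁻¹ i k) * R j k| :=
        hdiff ▸ Finset.abs_sum_le_sum_abs _ _
    _ ≤ ∑ k, |G⁻¹ i k - K⁻¹ i k| := Finset.sum_le_sum fun k _ => by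
        rw [abs_mul]
        exact mul_le_of_le_one_right (abs_nonneg _) (hentry k)
    _ ≤ ∑ i, ∑ k, |G⁻¹ i k - K⁻¹ i k| :=
        Finset.single_le_sum (f := fun i => ∑ k, |G⁻¹ i k - K⁻¹ i k|)
          (fun i _ => Finset.sum_nonneg fun k _ => abs_nonneg _) (Finset.mem_univ i)

end Inverse

section InvariantFrame

variable {E : Type*} [NormedAddCommGroup E] [NormedSpace ℝ E]
  {ι κ : Type*} [Fintype ι] [Fintype κ] [DecidableEq κ]

/-- `N` is a `C¹` orthonormal frame, over the open set `s`, of a subbundle invariant under the `C¹`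
family of symmetric matrices `A`, and `B` is the matrix of `A` in this frame. This is all that is
retained of a block diagonalization: the columns of `N` are the columns of the orthogonal matrix
that belong to the block `B`. -/
structure IsInvariantFrame (A : E → Matrix ι ι ℝ) (N : E → Matrix ι κ ℝ) (B : E → Matrix κ κ ℝ)
    (s : Set E) : Prop where
  isOpen : IsOpen s
  contDiffOn_family : ∀ i j, ContDiffOn ℝ 1 (fun r => A r i j) s
  contDiffOn_frame : ∀ i j, ContDiffOn ℝ 1 (fun r => N r i j) s
  transpose_family : ∀ r ∈ s, (A r)ᵀ = A r
  orthonormal : ∀ r ∈ s, (N r)ᵀ * N r = 1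
  family_mul_frame : ∀ r ∈ s, A r * N r = N r * B r

theorem isInvariantFrame_of_block [DecidableEq ι] {e : κ → ι} (he : e.Injective)
    {A M : E → Matrix ι ι ℝ} {B : E → Matrix κ κ ℝ} {s : Set E} (hs : IsOpen s)
    (hA : ∀ i j, ContDiffOn ℝ 1 (fun r => A r i j) s) (hAsym : ∀ r ∈ s, (A r)ᵀ = A r)
    (hM : ∀ i j, ContDiffOn ℝ 1 (fun r => M r i j) s) (horth : ∀ r ∈ s, (M r)ᵀ * M r = 1)
    (hblock : ∀ r ∈ s, ((M r)ᵀ * A r * M r).submatrix e e = B r)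
    (hoff : ∀ r ∈ s, ∀ i ∉ Set.range e, ∀ j, ((M r)ᵀ * A r * M r) i (e j) = 0) :
    IsInvariantFrame A (fun r => (M r).submatrix id e) B s where
  isOpen := hs
  contDiffOn_family := hA
  contDiffOn_frame i j := hM i (e j)
  transpose_family := hAsym
  orthonormal r hr := transpose_submatrix_mul_submatrix_eq_one he (horth r hr)
  family_mul_frame r hr := by
    rw [mul_submatrix_of_block he (horth r hr) (hoff r hr), hblock r hr]

namespace IsInvariantFrame

variable {A : E → Matrix ι ι ℝ} {N : E → Matrix ι κ ℝ} {B : E → Matrix κ κ ℝ} {s : Set E} {r : E}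

theorem eventually_mem (hF : IsInvariantFrame A N B s) (hr : r ∈ s) : ∀ᶠ p in 𝓝 r, p ∈ s :=
  hF.isOpen.mem_nhds hr

theorem differentiableAt_family (hF : IsInvariantFrame A N B s) (hr : r ∈ s) (i j : ι) :
    DifferentiableAt ℝ (fun p => A p i j) r :=
  ((hF.contDiffOn_family i j).contDiffAt (hF.eventually_mem hr)).differentiableAt one_ne_zero

theorem contDiffAt_frame (hF : IsInvariantFrame A N B s) (hr : r ∈ s) (i : ι) (j : κ) :
    ContDiffAt ℝ 1 (fun p => N p i j) r :=
  (hF.contDiffOn_frame i j).contDiffAt (hF.eventually_mem hr)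

theorem differentiableAt_frame (hF : IsInvariantFrame A N B s) (hr : r ∈ s) (i : ι) (j : κ) :
    DifferentiableAt ℝ (fun p => N p i j) r :=
  (hF.contDiffAt_frame hr i j).differentiableAt one_ne_zero

theorem transpose_block (hF : IsInvariantFrame A N B s) (hr : r ∈ s) : (B r)ᵀ = B r :=
  block_transpose (hF.transpose_family r hr) (hF.orthonormal r hr) (hF.family_mul_frame r hr)

theorem eventually_transpose_family (hF : IsInvariantFrame A N B s) (hr : r ∈ s) :
    ∀ᶠ p in 𝓝 r, (A p)ᵀ = A p :=
  (hF.eventually_mem hr).mono hF.transpose_family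

theorem eventually_transpose_block (hF : IsInvariantFrame A N B s) (hr : r ∈ s) :
    ∀ᶠ p in 𝓝 r, (B p)ᵀ = B p :=
  (hF.eventually_mem hr).mono fun _ => hF.transpose_block

theorem block_eventuallyEq (hF : IsInvariantFrame A N B s) (hr : r ∈ s) :
    B =ᶠ[𝓝 r] fun p => (N p)ᵀ * A p * N p :=
  (hF.eventually_mem hr).mono fun p hp =>
    block_eq_compression (hF.orthonormal p hp) (hF.family_mul_frame p hp)

theorem contDiffAt_block (hF : IsInvariantFrame A N B s) (hr : r ∈ s) (i j : κ) :
    ContDiffAt ℝ 1 (fun p => B p i j) r := by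
  have hNt (i j) : ContDiffOn ℝ 1 (fun p => (N p)ᵀ i j) s := hF.contDiffOn_frame j i
  have hcomp : ContDiffOn ℝ 1 (fun p => ((N p)ᵀ * A p * N p) i j) s :=
    contDiffOn_mul_apply (contDiffOn_mul_apply hNt hF.contDiffOn_family) hF.contDiffOn_frame i j
  exact (hcomp.contDiffAt (hF.eventually_mem hr)).congr_of_eventuallyEq <|
    (hF.block_eventuallyEq hr).mono fun p hp => congrFun (congrFun hp i) j

theorem differentiableAt_block (hF : IsInvariantFrame A N B s) (hr : r ∈ s) (i j : κ) :
    DifferentiableAt ℝ (fun p => B p i j) r :=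
  (hF.contDiffAt_block hr i j).differentiableAt one_ne_zero

theorem transpose_connectionForm (hF : IsInvariantFrame A N B s) (hr : r ∈ s) (e : E) :
    (connectionForm N r e)ᵀ = -connectionForm N r e :=
  _root_.transpose_connectionForm (hF.differentiableAt_frame hr)
    ((hF.eventually_mem hr).mono hF.orthonormal) e

theorem continuousAt_connectionForm (hF : IsInvariantFrame A N B s) (hr : r ∈ s) (e : E)
    (i j : κ) : ContinuousAt (fun p => connectionForm N p e i j) r :=
  tendsto_finsetSum _ fun k _ => (hF.contDiffAt_frame hr k i).continuousAt.mul
    (continuousAt_fderiv_apply (hF.contDiffAt_frame hr k j) e)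

theorem entryDeriv_block (hF : IsInvariantFrame A N B s) (hr : r ∈ s) (e : E) :
    entryDeriv B r e = entryDeriv (fun p => (N r)ᵀ * A p * N r) r e +
      (B r * connectionForm N r e - connectionForm N r e * B r) :=
  (entryDeriv_congr (hF.block_eventuallyEq hr) e).trans <|
    entryDeriv_compression (hF.differentiableAt_family hr) (hF.transpose_family r hr)
      (hF.differentiableAt_frame hr) ((hF.eventually_mem hr).mono hF.orthonormal)
      (hF.family_mul_frame r hr) e

end IsInvariantFrame

end InvariantFrame

namespace IsInvariantFrame

variable {ι : Type*} [Fintype ι] {A : ℝ × ℝ → Matrix ι ι ℝ} {N : ℝ × ℝ → Matrix ι (Fin 2) ℝ}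
  {B : ℝ × ℝ → Matrix (Fin 2) (Fin 2) ℝ} {s : Set (ℝ × ℝ)} {r α : ℝ × ℝ}

theorem continuousAt_targetVec_block (hF : IsInvariantFrame A N B s) (hr : r ∈ s) (i : Fin 2) :
    ContinuousAt (fun p => targetVec (B p) i) r := by
  have hB (i j : Fin 2) : ContinuousAt (fun p => B p i j) r :=
    (hF.contDiffAt_block hr i j).continuousAt
  fin_cases i
  · exact (hB 0 0).sub (hB 1 1)
  · exact continuousAt_const.mul (hB 0 1)

theorem family_mul_frame_eq_smul (hF : IsInvariantFrame A N B s) (hr : r ∈ s) {l₁ l₂ : ℝ}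
    (hB : (B r).trace = l₁ + l₂ ∧ (B r).det = l₁ * l₂) (hdeg : l₁ = l₂) :
    A r * N r = l₁ • N r := by
  subst hdeg
  rw [hF.family_mul_frame r hr, eq_smul_one_of_trace_of_det (hF.transpose_block hr) hB.1 hB.2,
    Matrix.mul_smul, Matrix.mul_one]

theorem Jmat_block_sub (hF : IsInvariantFrame A N B s) (hr : r ∈ s) (i k : Fin 2) :
    Jmat B r i k - Jmat (fun p => (N r)ᵀ * A p * N r) r i k =
      2 * connectionForm N r (coordDir k) 0 1 * ![-targetVec (B r) 1, targetVec (B r) 0] i := by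
  rw [Jmat_apply (hF.differentiableAt_block hr),
    Jmat_apply (differentiableAt_const_mul_mul_const_apply (hF.differentiableAt_family hr) _ _),
    hF.entryDeriv_block hr, targetVec_add, Pi.add_apply, add_sub_cancel_left,
    targetVec_commutator (hF.transpose_block hr) (hF.transpose_connectionForm hr _), Pi.smul_apply,
    smul_eq_mul]

theorem Jmat_compression_eq_Jmat_block (hF : IsInvariantFrame A N B s) (hr : r ∈ s)
    (hB : targetVec (B r) = 0) : Jmat (fun p => (N r)ᵀ * A p * N r) r = Jmat B r := by
  ext i k
  refine (sub_eq_zero.mp ?_).symm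
  rw [hF.Jmat_block_sub hr, hB]
  fin_cases i <;> simp

theorem tendsto_Jmat_compression (hF : IsInvariantFrame A N B s) (hα : α ∈ s)
    (hB : targetVec (B α) = 0) :
    Tendsto (fun r => Jmat (fun p => (N r)ᵀ * A p * N r) r) (𝓝 α) (𝓝 (Jmat B α)) := by
  refine tendsto_pi_nhds.mpr fun i => tendsto_pi_nhds.mpr fun k => ?_
  have htarget (i : Fin 2) : Tendsto (fun r => targetVec (B r) i) (𝓝 α) (𝓝 0) := by
    simpa only [hB, Pi.zero_apply] using (hF.continuousAt_targetVec_block hα i).tendsto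
  have hrot : Tendsto (fun r => ![-targetVec (B r) 1, targetVec (B r) 0] i) (𝓝 α) (𝓝 0) := by
    fin_cases i
    · exact neg_zero (G := ℝ) ▸ (htarget 1).neg
    · exact htarget 0
  have hdiff : Tendsto (fun r => Jmat B r i k - 2 * connectionForm N r (coordDir k) 0 1 *
      ![-targetVec (B r) 1, targetVec (B r) 0] i) (𝓝 α) (𝓝 (Jmat B α i k)) := by
    have hJ := (continuousAt_Jmat (hF.contDiffAt_block hα)).tendsto
    have hJik := tendsto_pi_nhds.mp (tendsto_pi_nhds.mp hJ i) k
    have hΩ := (hF.continuousAt_connectionForm hα (coordDir k) 0 1).tendsto.const_mul 2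
    simpa only [mul_zero, sub_zero] using hJik.sub (hΩ.mul hrot)
  refine hdiff.congr' ((hF.eventually_mem hα).mono fun r hr => ?_)
  rw [← hF.Jmat_block_sub hr, sub_sub_cancel]

theorem isBigO_Jmat_block_sub (hF : IsInvariantFrame A N B s) (hα : α ∈ s) {l₁ l₂ : ℝ × ℝ → ℝ}
    (hB : ∀ r ∈ s, (B r).trace = l₁ r + l₂ r ∧ (B r).det = l₁ r * l₂ r) (i k : Fin 2) :
    (fun r => Jmat B r i k - Jmat (fun p => (N r)ᵀ * A p * N r) r i k) =O[𝓝 α]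
      fun r => l₂ r - l₁ r := by
  have hgap (r) (hr : r ∈ s) : |![-targetVec (B r) 1, targetVec (B r) 0] i| ≤ |l₂ r - l₁ r| := by
    have h := abs_targetVec_le (hF.transpose_block hr) (hB r hr).1 (hB r hr).2
    fin_cases i
    · exact (abs_neg _).trans_le (h 1)
    · exact h 0
  have hrot : (fun r => ![-targetVec (B r) 1, targetVec (B r) 0] i) =O[𝓝 α] fun r => l₂ r - l₁ r :=
    IsBigO.of_bound 1 <| (hF.eventually_mem hα).mono fun r hr => by
      rw [one_mul]
      exact hgap r hr
  have hΩ : (fun r => 2 * connectionForm N r (coordDir k) 0 1) =O[𝓝 α] fun _ => (1 : ℝ) :=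
    ((hF.continuousAt_connectionForm hα (coordDir k) 0 1).tendsto.const_mul 2).isBigO_one ℝ
  refine IsBigO.congr' (hΩ.mul hrot) ((hF.eventually_mem hα).mono fun r hr => ?_)
    (.of_eq (funext fun _ => one_mul _))
  exact (hF.Jmat_block_sub hr i k).symm

end IsInvariantFrame

section Degeneracy

variable {n : ℕ} {A : ℝ × ℝ → Matrix (Fin n) (Fin n) ℝ} {α : ℝ × ℝ}

theorem Jmat_tildeA_mul {r : ℝ × ℝ} (hA : ∀ i j, DifferentiableAt ℝ (fun p => A p i j) r)
    (hAsym : ∀ᶠ p in 𝓝 r, (A p)ᵀ = A p) (X : Matrix (Fin n) (Fin 2) ℝ)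
    {W : Matrix (Fin 2) (Fin 2) ℝ} (hW : Wᵀ * W = 1) :
    Jmat (tildeA A ((X * W).col 0) ((X * W).col 1)) r =
      targetConj W * Jmat (fun p => Xᵀ * A p * X) r := by
  have hX : ∀ᶠ p in 𝓝 r, (Xᵀ * A p * X)ᵀ = Xᵀ * A p * X := hAsym.mono fun p hp => by
    simp only [transpose_mul, transpose_transpose, hp, Matrix.mul_assoc]
  rw [tildeA_col, ← Jmat_conj (differentiableAt_const_mul_mul_const_apply hA Xᵀ X) hX hW]
  simp only [transpose_mul, Matrix.mul_assoc]

theorem det_Jmat_tildeA_ne_zero_of_eigenframes (hA : ∀ i j, DifferentiableAt ℝ (fun p => A p i j) α)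
    (hAsym : ∀ᶠ p in 𝓝 α, (A p)ᵀ = A p) {e : Fin 2 → Fin n} (he : e.Injective)
    {V : Matrix (Fin n) (Fin n) ℝ} {d : Fin n → ℝ} (hV : Vᵀ * V = 1)
    (hAV : A α = V * diagonal d * Vᵀ) {μ : ℝ} (hd : ∀ i ∉ Set.range e, d i ≠ μ)
    {X Y : Matrix (Fin n) (Fin 2) ℝ} (hX : A α * X = μ • X) (hY : A α * Y = μ • Y)
    (hXX : Xᵀ * X = 1) (hYY : Yᵀ * Y = 1)
    (hJ : (Jmat (tildeA A (Y.col 0) (Y.col 1)) α).det ≠ 0) :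
    (Jmat (tildeA A (X.col 0) (X.col 1)) α).det ≠ 0 := by
  obtain ⟨U, hU, rfl⟩ := exists_orthogonal_of_eigenframes he hV hAV hd hX hY hXX hYY
  rw [Jmat_tildeA_mul hA hAsym X hU, det_mul] at hJ
  rw [tildeA_col]
  exact right_ne_zero_of_mul hJ

end Degeneracy

theorem stmt7_general {n : ℕ} {A : ℝ × ℝ → Matrix (Fin n) (Fin n) ℝ}
    {N : ℝ × ℝ → Matrix (Fin n) (Fin 2) ℝ} {B : ℝ × ℝ → Matrix (Fin 2) (Fin 2) ℝ}
    {Ω₀ : Set (ℝ × ℝ)} (hF : IsInvariantFrame A N B Ω₀) {l₁ l₂ : ℝ × ℝ → ℝ}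
    (hB : ∀ r ∈ Ω₀, (B r).trace = l₁ r + l₂ r ∧ (B r).det = l₁ r * l₂ r)
    {α : ℝ × ℝ} (hα : α ∈ Ω₀) (hdeg : l₁ α = l₂ α)
    (hJ : (Jmat (tildeA A ((N α).col 0) ((N α).col 1)) α).det ≠ 0) :
    ∃ Ω ⊆ Ω₀, IsOpen Ω ∧ α ∈ Ω ∧ ∃ c > 0, ∀ r ∈ Ω,
      ∀ W : Matrix (Fin 2) (Fin 2) ℝ, Wᵀ * W = 1 →
        (Jmat (fun p => Wᵀ * B p * W) r).det ≠ 0 ∧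
        (Jmat (tildeA A ((N r * W).col 0) ((N r * W).col 1)) r).det ≠ 0 ∧
        ∀ i j : Fin 2,
          |(Jmat (fun p => Wᵀ * B p * W) r)⁻¹ i j -
              (Jmat (tildeA A ((N r * W).col 0) ((N r * W).col 1)) r)⁻¹ i j| ≤
            c * |l₂ r - l₁ r| := by
  set K : ℝ × ℝ → Matrix (Fin 2) (Fin 2) ℝ := fun r => Jmat (fun p => (N r)ᵀ * A p * N r) r
  have hBα : targetVec (B α) = 0 := funext fun i => abs_nonpos_iff.mp <| by
    simpa only [hdeg, sub_self, abs_zero] using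
      abs_targetVec_le (hF.transpose_block hα) (hB α hα).1 (hB α hα).2 i
  have hdet : (Jmat B α).det ≠ 0 := by
    rwa [tildeA_col, hF.Jmat_compression_eq_Jmat_block hα hBα] at hJ
  have hG : Tendsto (Jmat B) (𝓝 α) (𝓝 (Jmat B α)) := continuousAt_Jmat (hF.contDiffAt_block hα)
  have hK : Tendsto K (𝓝 α) (𝓝 (Jmat B α)) := hF.tendsto_Jmat_compression hα hBα
  have hO : (fun r => ∑ i, ∑ k, |(Jmat B r)⁻¹ i k - (K r)⁻¹ i k|) =O[𝓝 α] fun r => l₂ r - l₁ r :=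
    IsBigO.fun_sum fun i _ => IsBigO.fun_sum fun k _ =>
      (isBigO_inv_sub_inv hG hK hdet (hF.isBigO_Jmat_block_sub hα hB) i k).abs_left
  obtain ⟨c, hc, hbound⟩ := hO.exists_pos
  obtain ⟨Ω, hΩ, hopen, hαΩ⟩ := eventually_nhds_iff.mp <| (hF.eventually_mem hα).and <|
    (eventually_det_ne_zero hG hdet).and <| (eventually_det_ne_zero hK hdet).and hbound.bound
  refine ⟨Ω, fun r hr => (hΩ r hr).1, hopen, hαΩ, c, hc, fun r hr W hW => ?_⟩
  obtain ⟨hr₀, hGr, hKr, hle⟩ := hΩ r hr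
  have hR : (targetConj W)ᵀ * targetConj W = 1 := targetConj_orthogonal hW
  have hRdet : (targetConj W).det ≠ 0 := det_ne_zero_of_left_inverse hR
  rw [Jmat_conj (hF.differentiableAt_block hr₀) (hF.eventually_transpose_block hr₀) hW,
    Jmat_tildeA_mul (hF.differentiableAt_family hr₀) (hF.eventually_transpose_family hr₀) _ hW,
    det_mul, det_mul]
  exact ⟨mul_ne_zero hRdet hGr, mul_ne_zero hRdet hKr, fun i j =>
    (abs_inv_sub_inv_orthogonal_mul_le hR _ _ i j).trans ((le_abs_self _).trans hle)⟩

/-- key estimate in the proof of Lemma 5 of the paper: near a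
non-degenerate conical point, the inverse Jacobians computed from the block `B^r`
(the smooth block `B` rotated by a constant orthogonal `W` so as to be diagonal at
`r`, aligned with the eigenvectors `v₁, v₂` at `r`) and from `Ã^r` are both defined
and differ by `O(|λ₂(r) − λ₁(r)|)`. -/
theorem stmt7 {n : ℕ} (hn : 2 < n)
    (A : ℝ × ℝ → Matrix (Fin n) (Fin n) ℝ)
    (hA : ∀ i j, ContDiff ℝ 2 fun r => A r i j)
    (hAsym : ∀ r, (A r)ᵀ = A r)
    (lam : ℝ × ℝ → Fin n → ℝ)
    (hmono : ∀ r, Monotone (lam r))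
    (heig : ∀ r, ∃ V : Matrix (Fin n) (Fin n) ℝ,
      Vᵀ * V = 1 ∧ A r = V * diagonal (lam r) * Vᵀ)
    (α : ℝ × ℝ)
    (hdeg : lam α ⟨0, by omega⟩ = lam α ⟨1, by omega⟩)
    (hgap : lam α ⟨1, by omega⟩ < lam α ⟨2, by omega⟩)
    -- non-degeneracy of the conical point, via an orthonormal eigenpair at `α`
    (w₁ w₂ : Fin n → ℝ)
    (hw₁ : (A α).mulVec w₁ = lam α ⟨0, by omega⟩ • w₁)
    (hw₂ : (A α).mulVec w₂ = lam α ⟨1, by omega⟩ • w₂)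
    (hw₁n : w₁ ⬝ᵥ w₁ = 1) (hw₂n : w₂ ⬝ᵥ w₂ = 1) (hw₁₂ : w₁ ⬝ᵥ w₂ = 0)
    (hJα : (Jmat (tildeA A w₁ w₂) α).det ≠ 0)
    -- the smooth orthogonal block diagonalization near `α`
    (Ω₀ : Set (ℝ × ℝ)) (hΩ₀ : IsOpen Ω₀) (hαΩ₀ : α ∈ Ω₀)
    (M : ℝ × ℝ → Matrix (Fin n) (Fin n) ℝ)
    (hM : ∀ i j, ContDiffOn ℝ 2 (fun r => M r i j) Ω₀)
    (hMorth : ∀ r ∈ Ω₀, (M r)ᵀ * M r = 1)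
    (B : ℝ × ℝ → Matrix (Fin 2) (Fin 2) ℝ)
    (hblock : ∀ r ∈ Ω₀, ∀ i j : Fin 2,
      ((M r)ᵀ * A r * M r) ⟨i.val, by have := i.isLt; omega⟩ ⟨j.val, by have := j.isLt; omega⟩
        = B r i j)
    (hoff : ∀ r ∈ Ω₀, ∀ i j : Fin n,
      (i.val < 2 ∧ 2 ≤ j.val) ∨ (2 ≤ i.val ∧ j.val < 2) → ((M r)ᵀ * A r * M r) i j = 0)
    (hBeig : ∀ r ∈ Ω₀, B r 0 0 + B r 1 1 = lam r ⟨0, by omega⟩ + lam r ⟨1, by omega⟩ ∧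
      (B r).det = lam r ⟨0, by omega⟩ * lam r ⟨1, by omega⟩) :
    ∃ Ω ⊆ Ω₀, IsOpen Ω ∧ α ∈ Ω ∧ ∃ c > 0, ∀ r ∈ Ω,
      ∀ v₁ v₂ : Fin n → ℝ,
        (A r).mulVec v₁ = lam r ⟨0, by omega⟩ • v₁ →
        (A r).mulVec v₂ = lam r ⟨1, by omega⟩ • v₂ →
        v₁ ⬝ᵥ v₁ = 1 → v₂ ⬝ᵥ v₂ = 1 → v₁ ⬝ᵥ v₂ = 0 →
        ∀ W : Matrix (Fin 2) (Fin 2) ℝ, Wᵀ * W = 1 →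
          -- `W` aligns the first two columns of `M(r)` with `v₁, v₂`
          (∀ i : Fin n,
            (∑ k : Fin 2, M r i ⟨k.val, by have := k.isLt; omega⟩ * W k 0) = v₁ i) →
          (∀ i : Fin n,
            (∑ k : Fin 2, M r i ⟨k.val, by have := k.isLt; omega⟩ * W k 1) = v₂ i) →
          -- so that `B^r := Wᵀ B W` is diagonal at `r`
          Wᵀ * B r * W = !![lam r ⟨0, by omega⟩, 0; 0, lam r ⟨1, by omega⟩] →
          (Jmat (fun p => Wᵀ * B p * W) r).det ≠ 0 ∧
          (Jmat (tildeA A v₁ v₂) r).det ≠ 0 ∧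
          ∀ i j : Fin 2,
            |(Jmat (fun p => Wᵀ * B p * W) r)⁻¹ i j - (Jmat (tildeA A v₁ v₂) r)⁻¹ i j|
              ≤ c * |lam r ⟨1, by omega⟩ - lam r ⟨0, by omega⟩| := by
  have he : (Fin.castLE hn.le).Injective := Fin.castLE_injective hn.le
  have htail (i : Fin n) (hi : i ∉ Set.range (Fin.castLE hn.le)) : 2 ≤ i.val := by
    simpa only [Fin.range_castLE, Set.mem_ofPred_eq, not_lt] using hi
  have hF : IsInvariantFrame A (fun r => (M r).submatrix id (Fin.castLE hn.le)) B Ω₀ :=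
    isInvariantFrame_of_block he hΩ₀ (fun i j => ((hA i j).of_le one_le_two).contDiffOn)
      (fun r _ => hAsym r) (fun i j => (hM i j).of_le one_le_two) hMorth
      (fun r hr => ext (hblock r hr))
      fun r hr i hi j => hoff r hr i _ (.inr ⟨htail i hi, j.isLt⟩)
  have htrace (r) (hr : r ∈ Ω₀) := (trace_fin_two (B r)).symm ▸ hBeig r hr
  have hJ : (Jmat (tildeA A (((M α).submatrix id (Fin.castLE hn.le)).col 0)
      (((M α).submatrix id (Fin.castLE hn.le)).col 1)) α).det ≠ 0 := by
    obtain ⟨V, hV, hAV⟩ := heig α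
    refine det_Jmat_tildeA_ne_zero_of_eigenframes (hF.differentiableAt_family hαΩ₀)
      (.of_forall hAsym) he hV hAV (fun i hi => ?_)
      (hF.family_mul_frame_eq_smul hαΩ₀ (htrace α hαΩ₀) hdeg) (mul_pair_eq_smul hw₁ (hdeg ▸ hw₂))
      (hF.orthonormal α hαΩ₀) (transpose_mul_self_of_pair hw₁n hw₂n hw₁₂) hJα
    exact (hdeg.trans_lt (hgap.trans_le (hmono α (htail i hi)))).ne'
  obtain ⟨Ω, hΩ, hopen, hαΩ, c, hc, H⟩ := stmt7_general hF htrace hαΩ₀ hdeg hJ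
  refine ⟨Ω, hΩ, hopen, hαΩ, c, hc, fun r hr v₁ v₂ _ _ _ _ _ W hW hv₁ hv₂ _ => ?_⟩
  rw [← funext hv₁, ← funext hv₂]
  exact H r hr W hW
end
end

section
/- Let A : ℝ² → ℝ^{n×n} be a C¹ family of real symmetric matrices and r₀ a point at which λ(r₀) is a simple eigenvalue of A(r₀) with unit eigenvector v. Then the eigenvalue function λ(r) is differentiable at r₀ and its gradient is given by the Hellmann–Feynman formula D_{r₀} λ = (⟨v, ∂ₓA(r₀) v⟩, ⟨v, ∂_y A(r₀) v⟩), i.e. D_{r₀}λ = D_{r₀}⟨v, A(r)v⟩. -/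
noncomputable section
open Matrix

/-!
Complete the simple eigenvector `v` of `A x₀` by a left eigenvector `w` with `w ⬝ᵥ v = 1` (for
symmetric `A x₀` and unit `v`, take `w = v`). Adding the rank-one matrix `v wᵀ` to the singular
matrix `A x - λ x` makes it invertible near `x₀`, so `u x = (A x - λ x + v wᵀ)⁻¹ v` is continuous
at `x₀`; it is the eigenvector of `A x` normalized by `w ⬝ᵥ u x = 1`. Pairing the eigenvalue
equation with `w` gives the exact identity `λ x - λ x₀ = w ⬝ᵥ (A x - A x₀) *ᵥ u x`. As `A x - A x₀`
vanishes at `x₀`, continuity of `u` suffices to differentiate the right-hand side there.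
-/

open scoped Topology

section Algebra

variable {n : Type*} [Fintype n]

theorem dotProduct_sub_mulVec_of_eigenvectors {R : Type*} [CommRing R] {M M₀ : Matrix n n R}
    {μ μ₀ : R} {w z : n → R} (hw : w ᵥ* M₀ = μ₀ • w) (hz : M *ᵥ z = μ • z) :
    w ⬝ᵥ (M - M₀) *ᵥ z = (μ - μ₀) * (w ⬝ᵥ z) := by
  rw [sub_mulVec, dotProduct_sub, hz, dotProduct_mulVec, hw, dotProduct_smul, smul_dotProduct,
    smul_eq_mul, smul_eq_mul, sub_mul]

variable [DecidableEq n] {K : Type*} [Field K] {N : Matrix n n K} {v w : n → K}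

theorem exists_mulVec_eq_smul_iff_det_sub_smul_one_eq_zero {M : Matrix n n K} {μ : K} :
    (∃ z, z ≠ 0 ∧ M *ᵥ z = μ • z) ↔ (M - μ • 1).det = 0 := by
  simp only [← exists_mulVec_eq_zero_iff, sub_mulVec, smul_mulVec, one_mulVec, sub_eq_zero]

theorem det_add_vecMulVec_ne_zero (hwN : w ᵥ* N = 0) (hwv : w ⬝ᵥ v = 1)
    (hker : ∀ z, N *ᵥ z = 0 → ∃ c : K, z = c • v) : (N + vecMulVec v w).det ≠ 0 := by
  intro hdet
  obtain ⟨z, hz₀, hz⟩ := exists_mulVec_eq_zero_iff.mpr hdet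
  rw [add_mulVec, vecMulVec_mulVec, op_smul_eq_smul] at hz
  have hwz : w ⬝ᵥ z = 0 := by
    simpa [dotProduct_mulVec, hwN, hwv] using congrArg (w ⬝ᵥ ·) hz
  rw [hwz, zero_smul, add_zero] at hz
  obtain ⟨c, rfl⟩ := hker z hz
  rw [dotProduct_smul, hwv, smul_eq_mul, mul_one] at hwz
  exact hz₀ (by rw [hwz, zero_smul])

theorem mulVec_inv_mulVec_eq_zero_and_dotProduct_eq_one (hN : N.det = 0)
    (hT : (N + vecMulVec v w).det ≠ 0) :
    N *ᵥ ((N + vecMulVec v w)⁻¹ *ᵥ v) = 0 ∧ w ⬝ᵥ ((N + vecMulVec v w)⁻¹ *ᵥ v) = 1 := by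
  obtain ⟨z, hz₀, hz⟩ := exists_mulVec_eq_zero_iff.mpr hN
  set T := N + vecMulVec v w with hT_def
  have hTz : T *ᵥ z = (w ⬝ᵥ z) • v := by
    rw [hT_def, add_mulVec, hz, zero_add, vecMulVec_mulVec, op_smul_eq_smul]
  have hz_eq : z = (w ⬝ᵥ z) • (T⁻¹ *ᵥ v) := by
    rw [← mulVec_smul, ← hTz, mulVec_mulVec, nonsing_inv_mul _ hT.isUnit, one_mulVec]
  have hwz : w ⬝ᵥ z ≠ 0 := fun h => hz₀ (by rw [hz_eq, h, zero_smul])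
  constructor
  · rw [hz_eq, mulVec_smul] at hz
    exact (smul_eq_zero.mp hz).resolve_left hwz
  · have h := congrArg (w ⬝ᵥ ·) hz_eq
    simp only [dotProduct_smul, smul_eq_mul] at h
    exact (left_eq_mul₀ hwz).mp h

end Algebra

section Continuity

variable {n X K : Type*} [Fintype n] [TopologicalSpace X] [Field K] [TopologicalSpace K]
  [IsTopologicalDivisionRing K] [T1Space K] {x₀ : X} {v w : n → K}

theorem exists_continuousAt_mulVec_eq_zero [DecidableEq n] {N : X → Matrix n n K}
    (hN : ContinuousAt N x₀) (hdet : ∀ᶠ x in 𝓝 x₀, (N x).det = 0) (hNv : N x₀ *ᵥ v = 0)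
    (hwN : w ᵥ* N x₀ = 0) (hwv : w ⬝ᵥ v = 1)
    (hker : ∀ z, N x₀ *ᵥ z = 0 → ∃ c : K, z = c • v) :
    ∃ u : X → n → K, ContinuousAt u x₀ ∧ u x₀ = v ∧
      ∀ᶠ x in 𝓝 x₀, N x *ᵥ u x = 0 ∧ w ⬝ᵥ u x = 1 := by
  set T : X → Matrix n n K := fun x => N x + vecMulVec v w with hT_def
  have hT : ContinuousAt T x₀ := hN.add continuousAt_const
  have hT₀ : (T x₀).det ≠ 0 := det_add_vecMulVec_ne_zero hwN hwv hker
  have hT_inv : ContinuousAt (fun x => (T x)⁻¹) x₀ := by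
    refine (continuousAt_matrix_inv (T x₀) ?_).comp hT
    simpa only [Ring.inverse_eq_inv'] using continuousAt_inv₀ hT₀
  have hT_ne : ∀ᶠ x in 𝓝 x₀, (T x).det ≠ 0 :=
    (continuous_id.matrix_det.continuousAt.comp hT).eventually_ne hT₀
  have hTv : T x₀ *ᵥ v = v := by
    rw [hT_def, add_mulVec, hNv, zero_add, vecMulVec_mulVec, hwv, op_smul_eq_smul, one_smul]
  refine ⟨fun x => (T x)⁻¹ *ᵥ v, ?_, ?_, ?_⟩
  · exact (continuous_id.matrix_mulVec continuous_const).continuousAt.comp hT_inv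
  · calc (T x₀)⁻¹ *ᵥ v = (T x₀)⁻¹ *ᵥ (T x₀ *ᵥ v) := by rw [hTv]
      _ = v := by rw [mulVec_mulVec, nonsing_inv_mul _ hT₀.isUnit, one_mulVec]
  · filter_upwards [hdet, hT_ne] with x hx hTx
    exact mulVec_inv_mulVec_eq_zero_and_dotProduct_eq_one hx hTx

theorem exists_continuousAt_eigenvector {A : X → Matrix n n K} {lam : X → K}
    (hA : ContinuousAt A x₀) (hlam : ContinuousAt lam x₀)
    (heval : ∀ᶠ x in 𝓝 x₀, ∃ z : n → K, z ≠ 0 ∧ A x *ᵥ z = lam x • z)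
    (hv : A x₀ *ᵥ v = lam x₀ • v) (hw : w ᵥ* A x₀ = lam x₀ • w) (hwv : w ⬝ᵥ v = 1)
    (hsimple : ∀ z : n → K, A x₀ *ᵥ z = lam x₀ • z → ∃ c : K, z = c • v) :
    ∃ u : X → n → K, ContinuousAt u x₀ ∧ u x₀ = v ∧
      ∀ᶠ x in 𝓝 x₀, A x *ᵥ u x = lam x • u x ∧ w ⬝ᵥ u x = 1 := by
  classical
  have hker (x : X) (z : n → K) : (A x - lam x • 1) *ᵥ z = 0 ↔ A x *ᵥ z = lam x • z := by
    rw [sub_mulVec, smul_mulVec, one_mulVec, sub_eq_zero]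
  have hwN : w ᵥ* (A x₀ - lam x₀ • 1) = 0 := by
    rw [vecMul_sub, vecMul_smul, vecMul_one, hw, sub_self]
  simp only [exists_mulVec_eq_smul_iff_det_sub_smul_one_eq_zero] at heval
  simp only [← hker] at hv hsimple ⊢
  exact exists_continuousAt_mulVec_eq_zero (hA.sub (hlam.smul continuousAt_const)) heval hv hwN
    hwv hsimple

end Continuity

section HellmannFeynman

variable {𝕜 E : Type*} [NontriviallyNormedField 𝕜] [NormedAddCommGroup E] [NormedSpace 𝕜 E]

theorem hasFDerivAt_smul_continuousAt_of_eq_zero {F : Type*} [NormedAddCommGroup F]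
    [NormedSpace 𝕜 F] {g : E → 𝕜} {g' : E →L[𝕜] 𝕜} {u : E → F} {x : E}
    (hg : HasFDerivAt g g' x) (hgx : g x = 0) (hu : ContinuousAt u x) :
    HasFDerivAt (fun y => g y • u y) (g'.smulRight (u x)) x := by
  have hrem : HasFDerivAt (fun y => g y • (u y - u x)) (0 : E →L[𝕜] F) x := by
    have hgO : g =O[𝓝 x] fun y => y - x := by simpa only [hgx, sub_zero] using hg.isBigO_sub
    have huo : (fun y => u y - u x) =o[𝓝 x] fun _ => (1 : ℝ) := by
      rw [Asymptotics.isLittleO_one_iff]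
      exact tendsto_sub_nhds_zero_iff.mpr hu
    rw [hasFDerivAt_iff_isLittleO]
    simpa [hgx] using hgO.norm_right.smul_isLittleO huo
  have hsum := (hg.smul_const (u x)).add hrem
  rw [add_zero] at hsum
  refine hsum.congr_of_eventuallyEq (.of_forall fun y => ?_)
  rw [Pi.add_apply, ← smul_add, add_sub_cancel]

theorem hasFDerivAt_eigenvalue_of_continuousAt_eigenvector {n : Type*} [Fintype n]
    {A : E → Matrix n n 𝕜} {A' : n → n → E →L[𝕜] 𝕜} {lam : E → 𝕜} {u : E → n → 𝕜} {w : n → 𝕜}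
    {x₀ : E} (hA : ∀ i j, HasFDerivAt (fun x => A x i j) (A' i j) x₀)
    (hu : ContinuousAt u x₀) (hw : w ᵥ* A x₀ = lam x₀ • w)
    (heig : ∀ᶠ x in 𝓝 x₀, A x *ᵥ u x = lam x • u x ∧ w ⬝ᵥ u x = 1) :
    HasFDerivAt lam (∑ i, w i • ∑ j, (A' i j).smulRight (u x₀ j)) x₀ := by
  have hlam : lam =ᶠ[𝓝 x₀]
      fun x => lam x₀ + ∑ i, w i * ∑ j, (A x i j - A x₀ i j) • u x j := by
    filter_upwards [heig] with x ⟨hx, hwx⟩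
    calc lam x = lam x₀ + w ⬝ᵥ (A x - A x₀) *ᵥ u x := by
          rw [dotProduct_sub_mulVec_of_eigenvectors hw hx, hwx, mul_one, add_sub_cancel]
      _ = lam x₀ + ∑ i, w i * ∑ j, (A x i j - A x₀ i j) • u x j := rfl
  refine HasFDerivAt.congr_of_eventuallyEq ?_ hlam
  refine HasFDerivAt.const_add _ <| HasFDerivAt.fun_sum fun i _ =>
    HasFDerivAt.const_mul (HasFDerivAt.fun_sum fun j _ => ?_) _
  exact hasFDerivAt_smul_continuousAt_of_eq_zero ((hA i j).sub_const _) (sub_self _)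
    (continuousAt_pi.mp hu j)

theorem stmt10_general {n : Type*} [Fintype n] {A : E → Matrix n n 𝕜} {lam : E → 𝕜} {x₀ : E}
    {v w : n → 𝕜} (hA : ∀ i j, DifferentiableAt 𝕜 (fun x => A x i j) x₀)
    (hlam : ContinuousAt lam x₀)
    (heval : ∀ᶠ x in 𝓝 x₀, ∃ z : n → 𝕜, z ≠ 0 ∧ A x *ᵥ z = lam x • z)
    (hv : A x₀ *ᵥ v = lam x₀ • v) (hw : w ᵥ* A x₀ = lam x₀ • w) (hwv : w ⬝ᵥ v = 1)
    (hsimple : ∀ z : n → 𝕜, A x₀ *ᵥ z = lam x₀ • z → ∃ c : 𝕜, z = c • v) :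
    DifferentiableAt 𝕜 lam x₀ ∧ ∀ h : E,
      fderiv 𝕜 lam x₀ h = w ⬝ᵥ (of fun i j => fderiv 𝕜 (fun x => A x i j) x₀ h) *ᵥ v := by
  have hAcont : ContinuousAt A x₀ :=
    continuousAt_pi.mpr fun i => continuousAt_pi.mpr fun j => (hA i j).continuousAt
  obtain ⟨u, hu, rfl, heig⟩ :=
    exists_continuousAt_eigenvector hAcont hlam heval hv hw hwv hsimple
  have hderiv := hasFDerivAt_eigenvalue_of_continuousAt_eigenvector
    (fun i j => (hA i j).hasFDerivAt) hu hw heig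
  refine ⟨hderiv.differentiableAt, fun h => ?_⟩
  simp [hderiv.fderiv, dotProduct, mulVec]

end HellmannFeynman

/-- Hellmann–Feynman: a simple eigenvalue branch of a C¹
symmetric family is differentiable, with gradient `(⟨v, ∂ₓA v⟩, ⟨v, ∂_y A v⟩)`. -/
theorem stmt10 {n : ℕ} (hn : 0 < n)
    (A : ℝ × ℝ → Matrix (Fin n) (Fin n) ℝ)
    (hA : ∀ i j, ContDiff ℝ 1 fun r => A r i j)
    (hAsym : ∀ r, (A r)ᵀ = A r)
    (r₀ : ℝ × ℝ) (lam : ℝ × ℝ → ℝ)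
    (hcont : ContinuousAt lam r₀)
    (heval : ∀ᶠ r in nhds r₀, ∃ w : Fin n → ℝ, w ≠ 0 ∧ (A r).mulVec w = lam r • w)
    (v : Fin n → ℝ)
    (hv : (A r₀).mulVec v = lam r₀ • v) (hvn : v ⬝ᵥ v = 1)
    (hsimple : ∀ w : Fin n → ℝ, (A r₀).mulVec w = lam r₀ • w → ∃ c : ℝ, w = c • v) :
    DifferentiableAt ℝ lam r₀ ∧
    pdx lam r₀ = v ⬝ᵥ (Matrix.of fun i j => pdx (fun r => A r i j) r₀).mulVec v ∧
    pdy lam r₀ = v ⬝ᵥ (Matrix.of fun i j => pdy (fun r => A r i j) r₀).mulVec v := by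
  have hleft : v ᵥ* A r₀ = lam r₀ • v := by rw [← mulVec_transpose, hAsym, hv]
  obtain ⟨hdiff, hfderiv⟩ := stmt10_general
    (fun i j => (hA i j).differentiable one_ne_zero r₀) hcont heval hv hleft hvn hsimple
  exact ⟨hdiff, hfderiv (1, 0), hfderiv (0, 1)⟩
end
end

section
/- Let A : ℝ² → ℝ^{n×n} be a C² family of real symmetric matrices and α ∈ ℝ² a point such that the two smallest eigenvalues satisfy λ₂(α) < λ₃(α) (the pair {λ₁, λ₂} is separated from the rest of the spectrum at α). Then there exist an open neighborhood Ω ⊂ ℝ² of α and a C² orthogonal-matrix-valued function M : Ω → ℝ^{n×n} such that M(r)ᵀ A(r) M(r) = B(r) ⊕ Λ(r) for all r ∈ Ω, where B ∈ C²(Ω, ℝ^{2×2}) is symmetric with eigenvalues λ₁(r), λ₂(r), and Λ ∈ C²(Ω, ℝ^{(n−2)×(n−2)}) is symmetric with eigenvalues λ₃(r), …, λₙ(r). -/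
noncomputable section
open Matrix

/-! Every orthogonal matrix close to `1` is, up to a block diagonal factor, the exponential of a
skew-symmetric matrix with vanishing diagonal blocks, hence is parametrized by the off-diagonal
block `X`. After an orthogonal change of basis `A(α)` is diagonal, with blocks `B` and `Λ`, and
the derivative at `X = 0` of the off-diagonal block of `A(α)` conjugated by `exp X` is the Sylvester
operator `X ↦ Λ X - X B`. The spectral gap makes this operator invertible, so the implicit function
theorem yields `X(r)` as smooth as `A` for which the off-diagonal block of the conjugate of `A(r)`
vanishes. The spectra of the two diagonal blocks stay separated near `α`, so the ordered
eigenvalues of `A(r)` split into those of `B(r)` followed by those of `Λ(r)`. -/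

open Filter Topology Polynomial
open scoped ContDiff

section OrthogonalDiagonalization

variable {ι κ : Type*} [Fintype ι] [Fintype κ] [DecidableEq ι] [DecidableEq κ]

/-- `HasOrthDiag S μ`: the real matrix `S` is orthogonally similar to `diagonal μ`, that is, `S` is
symmetric and `μ` lists its eigenvalues with multiplicity, in some order. -/
def HasOrthDiag (S : Matrix ι ι ℝ) (μ : ι → ℝ) : Prop :=
  ∃ W : Matrix ι ι ℝ, Wᵀ * W = 1 ∧ S = W * diagonal μ * Wᵀ

namespace HasOrthDiag

variable {S : Matrix ι ι ℝ} {μ : ι → ℝ}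

lemma transpose_eq (h : HasOrthDiag S μ) : Sᵀ = S := by
  obtain ⟨W, -, rfl⟩ := h
  simp [Matrix.mul_assoc]

lemma conj (h : HasOrthDiag S μ) {V : Matrix ι ι ℝ} (hV : Vᵀ * V = 1) :
    HasOrthDiag (Vᵀ * S * V) μ := by
  obtain ⟨W, hW, rfl⟩ := h
  refine ⟨Vᵀ * W, ?_, by simp only [transpose_mul, transpose_transpose, Matrix.mul_assoc]⟩
  calc (Vᵀ * W)ᵀ * (Vᵀ * W) = Wᵀ * (V * Vᵀ) * W := by
        simp only [transpose_mul, transpose_transpose, Matrix.mul_assoc]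
    _ = 1 := by rw [mul_eq_one_comm.1 hV, Matrix.mul_one, hW]

lemma submatrix (h : HasOrthDiag S μ) (e : κ ≃ ι) : HasOrthDiag (S.submatrix e e) (μ ∘ e) := by
  obtain ⟨W, hW, rfl⟩ := h
  refine ⟨W.submatrix e e, ?_, ?_⟩
  · rw [transpose_submatrix, submatrix_mul_equiv, hW, submatrix_one_equiv]
  · rw [← submatrix_diagonal_equiv, transpose_submatrix, submatrix_mul_equiv, submatrix_mul_equiv]

lemma comp_perm (h : HasOrthDiag S μ) (σ : Equiv.Perm ι) : HasOrthDiag S (μ ∘ σ) := by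
  obtain ⟨W, hW, rfl⟩ := h
  refine ⟨W.submatrix id σ, ?_, ?_⟩
  · rw [transpose_submatrix, ← submatrix_mul _ _ _ _ _ Function.bijective_id, hW,
      submatrix_one_equiv]
  · rw [← submatrix_diagonal_equiv, submatrix_mul_equiv, transpose_submatrix, submatrix_mul_equiv,
      submatrix_id_id]

lemma fromBlocks {T : Matrix κ κ ℝ} {ν : κ → ℝ} (hS : HasOrthDiag S μ) (hT : HasOrthDiag T ν) :
    HasOrthDiag (Matrix.fromBlocks S 0 0 T) (Sum.elim μ ν) := by
  obtain ⟨W₁, hW₁, rfl⟩ := hS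
  obtain ⟨W₂, hW₂, rfl⟩ := hT
  refine ⟨Matrix.fromBlocks W₁ 0 0 W₂, ?_, ?_⟩
  · simp [fromBlocks_transpose, fromBlocks_multiply, hW₁, hW₂]
  · simp [← fromBlocks_diagonal, fromBlocks_transpose, fromBlocks_multiply]

lemma charpoly_eq (h : HasOrthDiag S μ) : S.charpoly = ∏ i, (X - C (μ i)) := by
  obtain ⟨W, hW, rfl⟩ := h
  rw [charpoly_mul_comm, ← Matrix.mul_assoc, hW, Matrix.one_mul, charpoly_diagonal]

lemma roots_charpoly_eq (h : HasOrthDiag S μ) : S.charpoly.roots = Finset.univ.val.map μ := by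
  rw [h.charpoly_eq, ← roots_multiset_prod_X_sub_C (Finset.univ.val.map μ), Multiset.map_map]
  rfl

lemma spectrum_eq (h : HasOrthDiag S μ) : spectrum ℝ S = Set.range μ := by
  obtain ⟨W, hW, rfl⟩ := h
  exact (spectrum.units_conjugate (u := ⟨W, Wᵀ, mul_eq_one_comm.1 hW, hW⟩)).trans
    (spectrum_diagonal μ)

lemma mem_spectrum (h : HasOrthDiag S μ) (i : ι) : μ i ∈ spectrum ℝ S :=
  h.spectrum_eq ▸ Set.mem_range_self i

lemma eq_of_monotone {n : ℕ} {S : Matrix (Fin n) (Fin n) ℝ} {μ ν : Fin n → ℝ}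
    (hSμ : HasOrthDiag S μ) (hSν : HasOrthDiag S ν) (hμ : Monotone μ) (hν : Monotone ν) :
    μ = ν := by
  have hperm : (List.ofFn μ).Perm (List.ofFn ν) := by
    rw [← Multiset.coe_eq_coe, ← Fin.univ_val_map, ← Fin.univ_val_map, ← hSμ.roots_charpoly_eq,
      hSν.roots_charpoly_eq]
  exact List.ofFn_injective <| hperm.eq_of_pairwise (fun _ _ _ _ => le_antisymm)
    hμ.sortedLE_ofFn.pairwise hν.sortedLE_ofFn.pairwise

end HasOrthDiag

lemma exists_hasOrthDiag {S : Matrix ι ι ℝ} (hS : Sᵀ = S) : ∃ μ, HasOrthDiag S μ := by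
  have hH : S.IsHermitian := by rwa [IsHermitian, conjTranspose_eq_transpose_of_trivial]
  set U : Matrix ι ι ℝ := hH.eigenvectorUnitary.1
  have hU : star U = Uᵀ := by rw [star_eq_conjTranspose, conjTranspose_eq_transpose_of_trivial]
  exact ⟨hH.eigenvalues, U, hU ▸ Unitary.coe_star_mul_self hH.eigenvectorUnitary,
    hU ▸ hH.spectral_theorem⟩

lemma exists_monotone_hasOrthDiag {n : ℕ} {S : Matrix (Fin n) (Fin n) ℝ} (hS : Sᵀ = S) :
    ∃ μ, Monotone μ ∧ HasOrthDiag S μ :=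
  have ⟨μ, hμ⟩ := exists_hasOrthDiag hS
  ⟨μ ∘ Tuple.sort μ, Tuple.monotone_sort μ, hμ.comp_perm _⟩

end OrthogonalDiagonalization

section OrderedSplitting

variable {n m : ℕ}

/-- The splitting of `Fin n` into its first `m` elements and the remaining `n - m` ones. Reindexing
along it turns an `n × n` matrix into one with an upper left block of size `m`. -/
def finSumFinSubEquiv (h : m ≤ n) : Fin m ⊕ Fin (n - m) ≃ Fin n :=
  finSumFinEquiv.trans (finCongr (Nat.add_sub_of_le h))

lemma finSumFinSubEquiv_inl (h : m ≤ n) (i : Fin m) :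
    finSumFinSubEquiv h (Sum.inl i) = ⟨i, i.isLt.trans_le h⟩ := rfl

lemma finSumFinSubEquiv_inr (h : m ≤ n) (j : Fin (n - m)) :
    finSumFinSubEquiv h (Sum.inr j) = ⟨j + m, Nat.add_lt_of_lt_sub j.isLt⟩ :=
  Fin.ext (Nat.add_comm m j)

lemma monotone_sumElim_finSumFinSubEquiv_symm {α : Type*} [Preorder α] (h : m ≤ n)
    {μ : Fin m → α} {ν : Fin (n - m) → α} (hμ : Monotone μ) (hν : Monotone ν)
    (hμν : ∀ i j, μ i ≤ ν j) : Monotone (Sum.elim μ ν ∘ (finSumFinSubEquiv h).symm) := by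
  intro p q hpq
  obtain ⟨p, rfl⟩ := (finSumFinSubEquiv h).surjective p
  obtain ⟨q, rfl⟩ := (finSumFinSubEquiv h).surjective q
  simp only [Function.comp_apply, Equiv.symm_apply_apply]
  rcases p with i | i <;> rcases q with j | j <;>
    simp only [finSumFinSubEquiv_inl, finSumFinSubEquiv_inr, Fin.mk_le_mk] at hpq
  · exact hμ hpq
  · exact hμν i j
  · omega
  · exact hν (Nat.le_of_add_le_add_right hpq)

lemma fromBlocks_finSumFinSubEquiv_symm_eq_zero {R : Type*} [Zero R] (h : m ≤ n)
    (B : Matrix (Fin m) (Fin m) R) (L : Matrix (Fin (n - m)) (Fin (n - m)) R) {i j : Fin n}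
    (hij : (i.val < m ∧ m ≤ j.val) ∨ (m ≤ i.val ∧ j.val < m)) :
    fromBlocks B 0 0 L ((finSumFinSubEquiv h).symm i) ((finSumFinSubEquiv h).symm j) = 0 := by
  obtain ⟨p, rfl⟩ := (finSumFinSubEquiv h).surjective i
  obtain ⟨q, rfl⟩ := (finSumFinSubEquiv h).surjective j
  simp only [Equiv.symm_apply_apply]
  rcases p with i | i <;> rcases q with j | j <;>
    simp only [finSumFinSubEquiv_inl, finSumFinSubEquiv_inr] at hij
  · omega
  · rfl
  · rfl
  · omega

lemma HasOrthDiag.of_fromBlocks (h : m ≤ n) {B : Matrix (Fin m) (Fin m) ℝ}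
    {L : Matrix (Fin (n - m)) (Fin (n - m)) ℝ} {l : Fin n → ℝ} (hl : Monotone l)
    (hBL : HasOrthDiag (Matrix.fromBlocks B 0 0 L) (l ∘ finSumFinSubEquiv h))
    (hle : ∀ μ ∈ spectrum ℝ B, ∀ ν ∈ spectrum ℝ L, μ ≤ ν) :
    HasOrthDiag B (fun i => l (finSumFinSubEquiv h (Sum.inl i))) ∧
      HasOrthDiag L (fun j => l (finSumFinSubEquiv h (Sum.inr j))) := by
  set e := finSumFinSubEquiv h
  have hsymm := hBL.transpose_eq
  rw [fromBlocks_transpose, fromBlocks_inj] at hsymm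
  obtain ⟨μ, hμ, hBμ⟩ := exists_monotone_hasOrthDiag hsymm.1
  obtain ⟨ν, hν, hLν⟩ := exists_monotone_hasOrthDiag hsymm.2.2.2
  have hmono : Monotone (Sum.elim μ ν ∘ e.symm) :=
    monotone_sumElim_finSumFinSubEquiv_symm h hμ hν fun i j =>
      hle _ (hBμ.mem_spectrum i) _ (hLν.mem_spectrum j)
  have hl_eq : l = Sum.elim μ ν ∘ e.symm := by
    refine HasOrthDiag.eq_of_monotone ?_ ((hBμ.fromBlocks hLν).submatrix e.symm) hl hmono
    simpa [Function.comp_assoc] using hBL.submatrix e.symm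
  subst hl_eq
  exact ⟨by simpa using hBμ, by simpa using hLν⟩

end OrderedSplitting

section MatrixValuedMaps

open scoped Matrix.Norms.Operator

variable {ι κ : Type*} [Fintype ι] [Fintype κ]
variable {E : Type*} [NormedAddCommGroup E] [NormedSpace ℝ E] {k : WithTop ℕ∞} {x : E}

lemma contDiffAt_matrix {f : E → Matrix ι κ ℝ} :
    ContDiffAt ℝ k f x ↔ ∀ i j, ContDiffAt ℝ k (fun r => f r i j) x := by
  rw [← (Matrix.ofLinearEquiv ℝ (m := ι) (n := κ) (α := ℝ)).symm.toContinuousLinearEquiv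
    |>.comp_contDiffAt_iff, contDiffAt_pi]
  simp_rw [contDiffAt_pi]
  rfl

lemma contDiffAt_transpose {f : E → Matrix ι κ ℝ} (hf : ContDiffAt ℝ k f x) :
    ContDiffAt ℝ k (fun r => (f r)ᵀ) x :=
  contDiffAt_matrix.2 fun i j => contDiffAt_matrix.1 hf j i

variable [DecidableEq ι] [DecidableEq κ]

lemma contDiff_matrix_exp :
    ContDiff ℝ k (NormedSpace.exp : Matrix ι ι ℝ → Matrix ι ι ℝ) :=
  contDiff_iff_contDiffAt.2 fun S => (NormedSpace.exp_analytic (𝕂 := ℝ) S).contDiffAt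

lemma eventually_spectrum_lt_spectrum {Y : Type*} [TopologicalSpace Y] {y : Y}
    {S : Y → Matrix ι ι ℝ} {T : Y → Matrix κ κ ℝ} (hS : ContinuousAt S y) (hT : ContinuousAt T y)
    (hy : ∀ μ ∈ spectrum ℝ (S y), ∀ ν ∈ spectrum ℝ (T y), μ < ν) :
    ∀ᶠ r in 𝓝 y, ∀ μ ∈ spectrum ℝ (S r), ∀ ν ∈ spectrum ℝ (T r), μ < ν := by
  obtain ⟨c, hSc, hTc⟩ := Order.exists_between_finsets (S y).finite_spectrum.toFinset
    (T y).finite_spectrum.toFinset (by simpa using hy)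
  simp only [Set.Finite.mem_toFinset] at hSc hTc
  have hS' : ∀ᶠ r in 𝓝 y, spectrum ℝ (S r) ⊆ Set.Iio c := hS.eventually <|
    ((upperHemicontinuous_spectrum ℝ _).upperHemicontinuousAt (S y)).forall_isOpen _ isOpen_Iio hSc
  have hT' : ∀ᶠ r in 𝓝 y, spectrum ℝ (T r) ⊆ Set.Ioi c := hT.eventually <|
    ((upperHemicontinuous_spectrum ℝ _).upperHemicontinuousAt (T y)).forall_isOpen _ isOpen_Ioi hTc
  filter_upwards [hS', hT'] with r hSr hTr μ hμ ν hν using (hSr hμ).trans (hTr hν)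

end MatrixValuedMaps

section BlockRotation

open scoped Matrix.Norms.Operator

variable {ι κ : Type*} [Fintype ι] [Fintype κ]

variable (ι κ) in
/-- The skew-symmetric matrix with lower left block `X` and vanishing diagonal blocks. These
matrices form a complement, in the Lie algebra of the orthogonal group, to the Lie algebra of the
subgroup of block diagonal matrices. -/
def skewBlock : Matrix κ ι ℝ →L[ℝ] Matrix (ι ⊕ κ) (ι ⊕ κ) ℝ :=
  LinearMap.toContinuousLinearMap
    { toFun := fun X => fromBlocks 0 (-Xᵀ) X 0
      map_add' := fun X Y => by simp [fromBlocks_add, add_comm]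
      map_smul' := fun c X => by simp [fromBlocks_smul] }

lemma skewBlock_apply (X : Matrix κ ι ℝ) : skewBlock ι κ X = fromBlocks 0 (-Xᵀ) X 0 := rfl

lemma transpose_skewBlock (X : Matrix κ ι ℝ) : (skewBlock ι κ X)ᵀ = -skewBlock ι κ X := by
  simp [skewBlock_apply, fromBlocks_transpose, fromBlocks_neg]

lemma toBlocks₂₁_commutator_skewBlock (N : Matrix (ι ⊕ κ) (ι ⊕ κ) ℝ) (X : Matrix κ ι ℝ) :
    (N * skewBlock ι κ X - skewBlock ι κ X * N).toBlocks₂₁ =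
      N.toBlocks₂₂ * X - X * N.toBlocks₁₁ := by
  rw [← fromBlocks_toBlocks N, skewBlock_apply, fromBlocks_multiply, fromBlocks_multiply]
  ext j i
  simp [toBlocks₂₁]

variable (ι κ) in
/-- The lower left block of a matrix, as a continuous linear map, for use in differentiation. -/
def toBlocks₂₁CLM : Matrix (ι ⊕ κ) (ι ⊕ κ) ℝ →L[ℝ] Matrix κ ι ℝ :=
  LinearMap.toContinuousLinearMap
    { toFun := toBlocks₂₁
      map_add' := fun _ _ => rfl
      map_smul' := fun _ _ => rfl }

/-- The Sylvester operator `X ↦ P * X - X * Q`, the linearization of `rotatedBlock₂₁` at `0`. -/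
def sylvesterCLM (P : Matrix κ κ ℝ) (Q : Matrix ι ι ℝ) : Matrix κ ι ℝ →L[ℝ] Matrix κ ι ℝ :=
  LinearMap.toContinuousLinearMap (mulLeftLinearMap ι ℝ P - mulRightLinearMap κ ℝ Q)

lemma sylvesterCLM_apply (P : Matrix κ κ ℝ) (Q : Matrix ι ι ℝ) (X : Matrix κ ι ℝ) :
    sylvesterCLM P Q X = P * X - X * Q := rfl

variable [DecidableEq ι] [DecidableEq κ]

lemma isInvertible_sylvesterCLM_diagonal {a : ι → ℝ} {b : κ → ℝ} (hab : ∀ i j, a i ≠ b j) :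
    (sylvesterCLM (diagonal b) (diagonal a)).IsInvertible := by
  have hinj : Function.Injective (sylvesterCLM (diagonal b) (diagonal a)).toLinearMap := by
    rw [injective_iff_map_eq_zero]
    intro X hX
    ext j i
    have hji : b j * X j i - X j i * a i = 0 := by
      simpa [sylvesterCLM_apply] using congrFun (congrFun hX j) i
    have hmul : (b j - a i) * X j i = 0 := by linear_combination hji
    exact (mul_eq_zero.1 hmul).resolve_left (sub_ne_zero.2 (hab i j).symm)
  exact ⟨(LinearEquiv.ofInjectiveEndo _ hinj).toContinuousLinearEquiv, rfl⟩

/-- The orthogonal matrix `exp (skewBlock ι κ X)`. For small `X` these represent the orthogonal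
matrices near `1` modulo block diagonal ones. -/
def blockRotation (X : Matrix κ ι ℝ) : Matrix (ι ⊕ κ) (ι ⊕ κ) ℝ :=
  NormedSpace.exp (skewBlock ι κ X)

lemma blockRotation_zero : blockRotation (0 : Matrix κ ι ℝ) = 1 := by
  simp [blockRotation]

lemma transpose_blockRotation (X : Matrix κ ι ℝ) :
    (blockRotation X)ᵀ = blockRotation (-X) := by
  rw [blockRotation, ← Matrix.exp_transpose, transpose_skewBlock, ← map_neg, blockRotation]

lemma transpose_blockRotation_mul_self (X : Matrix κ ι ℝ) :
    (blockRotation X)ᵀ * blockRotation X = 1 := by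
  rw [transpose_blockRotation, blockRotation, blockRotation, map_neg,
    ← Matrix.exp_add_of_commute _ _ (Commute.refl (skewBlock ι κ X)).neg_left, neg_add_cancel,
    NormedSpace.exp_zero]

lemma contDiff_blockRotation {k : WithTop ℕ∞} :
    ContDiff ℝ k (blockRotation : Matrix κ ι ℝ → Matrix (ι ⊕ κ) (ι ⊕ κ) ℝ) :=
  contDiff_matrix_exp.comp (skewBlock ι κ).contDiff

lemma hasFDerivAt_blockRotation_zero :
    HasFDerivAt (blockRotation : Matrix κ ι ℝ → Matrix (ι ⊕ κ) (ι ⊕ κ) ℝ) (skewBlock ι κ) 0 := by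
  have hexp : HasFDerivAt NormedSpace.exp (1 : Matrix (ι ⊕ κ) (ι ⊕ κ) ℝ →L[ℝ] _)
      (skewBlock ι κ (0 : Matrix κ ι ℝ)) := by
    rw [map_zero]
    exact hasFDerivAt_exp_zero
  exact hexp.comp 0 (skewBlock ι κ).hasFDerivAt

lemma hasFDerivAt_transpose_blockRotation_zero :
    HasFDerivAt (fun X : Matrix κ ι ℝ => (blockRotation X)ᵀ) (-skewBlock ι κ) 0 := by
  simp_rw [transpose_blockRotation]
  have h : HasFDerivAt blockRotation (skewBlock ι κ) (-0) := by
    rw [neg_zero]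
    exact hasFDerivAt_blockRotation_zero
  refine (h.comp 0 (hasFDerivAt_id 0).neg).congr_fderiv ?_
  ext1 X
  exact map_neg (skewBlock ι κ) X

/-- The lower left block of the conjugate of `N` by `blockRotation X`. For symmetric `N` it vanishes
exactly when this conjugate is block diagonal. -/
def rotatedBlock₂₁ (N : Matrix (ι ⊕ κ) (ι ⊕ κ) ℝ) (X : Matrix κ ι ℝ) : Matrix κ ι ℝ :=
  ((blockRotation X)ᵀ * N * blockRotation X).toBlocks₂₁

lemma rotatedBlock₂₁_zero (N : Matrix (ι ⊕ κ) (ι ⊕ κ) ℝ) :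
    rotatedBlock₂₁ N 0 = N.toBlocks₂₁ := by
  simp [rotatedBlock₂₁, blockRotation_zero]

lemma hasFDerivAt_rotatedBlock₂₁_zero (N : Matrix (ι ⊕ κ) (ι ⊕ κ) ℝ) :
    HasFDerivAt (rotatedBlock₂₁ N) (sylvesterCLM N.toBlocks₂₂ N.toBlocks₁₁) 0 := by
  have hconj := (hasFDerivAt_transpose_blockRotation_zero.mul_const' N).mul'
    (hasFDerivAt_blockRotation_zero (ι := ι) (κ := κ))
  refine ((toBlocks₂₁CLM ι κ).hasFDerivAt.comp 0 hconj).congr_fderiv ?_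
  ext1 X
  -- `hconj` carries the operator norm topology, which is not syntactically that of `toBlocks₂₁CLM`,
  -- so the derivative has to be evaluated by unfolding.
  change ((blockRotation 0)ᵀ * N * skewBlock ι κ X +
    -skewBlock ι κ X * N * blockRotation 0).toBlocks₂₁ =
      N.toBlocks₂₂ * X - X * N.toBlocks₁₁
  rw [← toBlocks₂₁_commutator_skewBlock]
  simp [blockRotation_zero, sub_eq_add_neg]

variable {E : Type*} [NormedAddCommGroup E] [NormedSpace ℝ E] {k : WithTop ℕ∞}
  {A : E → Matrix (ι ⊕ κ) (ι ⊕ κ) ℝ} {x : E}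

lemma contDiffAt_rotatedBlock₂₁ {X : Matrix κ ι ℝ} (hA : ContDiffAt ℝ k A x) :
    ContDiffAt ℝ k (fun p : E × Matrix κ ι ℝ => rotatedBlock₂₁ (A p.1) p.2) (x, X) := by
  have hR : ContDiffAt ℝ k (fun p : E × Matrix κ ι ℝ => blockRotation p.2) (x, X) :=
    (contDiff_blockRotation.comp contDiff_snd).contDiffAt
  have hA' : ContDiffAt ℝ k (fun p : E × Matrix κ ι ℝ => A p.1) (x, X) :=
    hA.comp (x, X) contDiffAt_fst
  exact (toBlocks₂₁CLM ι κ).contDiff.contDiffAt.comp _ (((contDiffAt_transpose hR).mul hA').mul hR)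

variable [CompleteSpace E] {μ : ι ⊕ κ → ℝ}

lemma exists_contDiffAt_rotatedBlock₂₁_eq_zero (hk : k ≠ 0) (hA : ContDiffAt ℝ k A x)
    (hx : A x = diagonal μ) (hμ : ∀ i j, μ (Sum.inl i) ≠ μ (Sum.inr j)) :
    ∃ ψ : E → Matrix κ ι ℝ, ContDiffAt ℝ k ψ x ∧ ψ x = 0 ∧
      ∀ᶠ r in 𝓝 x, rotatedBlock₂₁ (A r) (ψ r) = 0 := by
  set f := fun p : E × Matrix κ ι ℝ => rotatedBlock₂₁ (A p.1) p.2
  have hf : ContDiffAt ℝ k f (x, 0) := contDiffAt_rotatedBlock₂₁ hA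
  have hinv : (fderiv ℝ f (x, 0) ∘L .inr ℝ E (Matrix κ ι ℝ)).IsInvertible := by
    have hpartial : HasFDerivAt (rotatedBlock₂₁ (A x)) (fderiv ℝ f (x, 0) ∘L .inr ℝ E _) 0 :=
      (hf.differentiableAt hk).hasFDerivAt.comp 0 (hasFDerivAt_prodMk_right x 0)
    rw [hpartial.unique (hasFDerivAt_rotatedBlock₂₁_zero (A x)), hx, toBlocks₁₁_diagonal,
      toBlocks₂₂_diagonal]
    exact isInvertible_sylvesterCLM_diagonal hμ
  have hx₂₁ : rotatedBlock₂₁ (A x) 0 = 0 := by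
    rw [rotatedBlock₂₁_zero, hx, toBlocks₂₁_diagonal]
  refine ⟨hf.implicitFunction hk hinv, hf.contDiffAt_implicitFunction hk hinv,
    hf.implicitFunction_apply_self hk hinv, ?_⟩
  filter_upwards [hf.eventually_apply_implicitFunction hk hinv] with r hr using hr.trans hx₂₁

theorem exists_contDiffAt_orthogonal_toBlocks₂₁_eq_zero (hk : k ≠ 0) (hA : ContDiffAt ℝ k A x)
    (hx : HasOrthDiag (A x) μ) (hμ : ∀ i j, μ (Sum.inl i) ≠ μ (Sum.inr j)) :
    ∃ M : E → Matrix (ι ⊕ κ) (ι ⊕ κ) ℝ, ContDiffAt ℝ k M x ∧ (∀ r, (M r)ᵀ * M r = 1) ∧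
      (M x)ᵀ * A x * M x = diagonal μ ∧
      ∀ᶠ r in 𝓝 x, ((M r)ᵀ * A r * M r).toBlocks₂₁ = 0 := by
  obtain ⟨V, hV, hVx⟩ := hx
  have hVx' : Vᵀ * A x * V = diagonal μ := by
    calc Vᵀ * A x * V = (Vᵀ * V) * diagonal μ * (Vᵀ * V) := by
          rw [hVx]
          simp only [Matrix.mul_assoc]
      _ = diagonal μ := by rw [hV, Matrix.one_mul, Matrix.mul_one]
  obtain ⟨ψ, hψ, hψx, hψ₂₁⟩ := exists_contDiffAt_rotatedBlock₂₁_eq_zero hk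
    ((contDiffAt_const.mul hA).mul contDiffAt_const) hVx' hμ
  refine ⟨fun r => V * blockRotation (ψ r),
    contDiffAt_const.mul (contDiff_blockRotation.contDiffAt.comp x hψ), fun r => ?_, ?_, ?_⟩
  · calc (V * blockRotation (ψ r))ᵀ * (V * blockRotation (ψ r))
        = (blockRotation (ψ r))ᵀ * (Vᵀ * V) * blockRotation (ψ r) := by
          simp only [transpose_mul, Matrix.mul_assoc]
      _ = 1 := by rw [hV, Matrix.mul_one, transpose_blockRotation_mul_self]
  · simpa only [hψx, blockRotation_zero, Matrix.mul_one] using hVx'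
  · filter_upwards [hψ₂₁] with r hr
    simpa only [rotatedBlock₂₁, transpose_mul, Matrix.mul_assoc] using hr

end BlockRotation


section BlockDiagonalization

open scoped Matrix.Norms.Operator

variable {E : Type*} [NormedAddCommGroup E] [NormedSpace ℝ E] [CompleteSpace E]
  {k : WithTop ℕ∞} {x : E} {n m : ℕ}

lemma eq_fromBlocks_of_transpose_eq {ι κ R : Type*} [Zero R] {N : Matrix (ι ⊕ κ) (ι ⊕ κ) R}
    (hN : Nᵀ = N) (h₂₁ : N.toBlocks₂₁ = 0) : N = fromBlocks N.toBlocks₁₁ 0 0 N.toBlocks₂₂ := by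
  have h₁₂ : N.toBlocks₁₂ = 0 := by
    rw [← hN]
    exact congrArg transpose h₂₁
  conv_lhs => rw [← fromBlocks_toBlocks N, h₁₂, h₂₁]

lemma transpose_submatrix_symm_mul_mul {ι κ R : Type*} [Fintype ι] [Fintype κ]
    [NonUnitalNonAssocSemiring R] (e : κ ≃ ι) (M : Matrix κ κ R) (A : Matrix ι ι R) :
    (M.submatrix e.symm e.symm)ᵀ * A * M.submatrix e.symm e.symm =
      (Mᵀ * A.submatrix e e * M).submatrix e.symm e.symm := by
  rw [← submatrix_mul_equiv _ _ _ e.symm, ← submatrix_mul_equiv _ _ _ e.symm, transpose_submatrix,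
    submatrix_submatrix, e.self_comp_symm, submatrix_id_id]

theorem exists_contDiffAt_orthogonal_eq_fromBlocks (h : m ≤ n) (hk : k ≠ 0)
    {A : E → Matrix (Fin m ⊕ Fin (n - m)) (Fin m ⊕ Fin (n - m)) ℝ} {lam : E → Fin n → ℝ}
    (hA : ContDiffAt ℝ k A x) (hmono : ∀ r, Monotone (lam r))
    (heig : ∀ r, HasOrthDiag (A r) (lam r ∘ finSumFinSubEquiv h))
    (hgap : ∀ i j, lam x (finSumFinSubEquiv h (Sum.inl i)) <
      lam x (finSumFinSubEquiv h (Sum.inr j))) :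
    ∃ (M : E → Matrix (Fin m ⊕ Fin (n - m)) (Fin m ⊕ Fin (n - m)) ℝ)
      (B : E → Matrix (Fin m) (Fin m) ℝ) (L : E → Matrix (Fin (n - m)) (Fin (n - m)) ℝ),
      ContDiffAt ℝ k M x ∧ ContDiffAt ℝ k B x ∧ ContDiffAt ℝ k L x ∧
      (∀ r, (M r)ᵀ * M r = 1) ∧
      ∀ᶠ r in 𝓝 x, (M r)ᵀ * A r * M r = fromBlocks (B r) 0 0 (L r) ∧
        HasOrthDiag (B r) (fun i => lam r (finSumFinSubEquiv h (Sum.inl i))) ∧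
        HasOrthDiag (L r) (fun j => lam r (finSumFinSubEquiv h (Sum.inr j))) := by
  obtain ⟨M, hM, hMM, hMx, hM₂₁⟩ := exists_contDiffAt_orthogonal_toBlocks₂₁_eq_zero hk hA
    (heig x) (fun i j => (hgap i j).ne)
  set N := fun r => (M r)ᵀ * A r * M r
  have hN : ContDiffAt ℝ k N x := ((contDiffAt_transpose hM).mul hA).mul hM
  have hB : ContDiffAt ℝ k (fun r => (N r).toBlocks₁₁) x :=
    contDiffAt_matrix.2 fun i j => contDiffAt_matrix.1 hN (Sum.inl i) (Sum.inl j)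
  have hL : ContDiffAt ℝ k (fun r => (N r).toBlocks₂₂) x :=
    contDiffAt_matrix.2 fun i j => contDiffAt_matrix.1 hN (Sum.inr i) (Sum.inr j)
  have hlt : ∀ᶠ r in 𝓝 x, ∀ μ ∈ spectrum ℝ (N r).toBlocks₁₁, ∀ ν ∈ spectrum ℝ (N r).toBlocks₂₂,
      μ < ν := by
    refine eventually_spectrum_lt_spectrum hB.continuousAt hL.continuousAt ?_
    simpa [N, hMx, toBlocks₁₁_diagonal, toBlocks₂₂_diagonal, spectrum_diagonal] using hgap
  refine ⟨M, _, _, hM, hB, hL, hMM, ?_⟩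
  filter_upwards [hM₂₁, hlt] with r h₂₁ hr
  have hNr : HasOrthDiag (N r) (lam r ∘ finSumFinSubEquiv h) := (heig r).conj (hMM r)
  have hblocks := eq_fromBlocks_of_transpose_eq hNr.transpose_eq h₂₁
  exact ⟨hblocks, HasOrthDiag.of_fromBlocks h (hmono r) (hblocks ▸ hNr)
    fun μ hμ ν hν => (hr μ hμ ν hν).le⟩

theorem stmt12_general (hm : m ≤ n) (hk : k ≠ 0) (hk' : k ≠ ∞)
    (A : E → Matrix (Fin n) (Fin n) ℝ) (α : E)
    (hA : ∀ i j, ContDiffAt ℝ k (fun r => A r i j) α)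
    (lam : E → Fin n → ℝ) (hmono : ∀ r, Monotone (lam r))
    (heig : ∀ r, HasOrthDiag (A r) (lam r))
    (hgap : ∀ i j : Fin n, i.val < m → m ≤ j.val → lam α i < lam α j) :
    ∃ Ω : Set E, IsOpen Ω ∧ α ∈ Ω ∧
    ∃ (M : E → Matrix (Fin n) (Fin n) ℝ) (B : E → Matrix (Fin m) (Fin m) ℝ)
      (L : E → Matrix (Fin (n - m)) (Fin (n - m)) ℝ),
      (∀ i j, ContDiffOn ℝ k (fun r => M r i j) Ω) ∧
      (∀ i j, ContDiffOn ℝ k (fun r => B r i j) Ω) ∧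
      (∀ i j, ContDiffOn ℝ k (fun r => L r i j) Ω) ∧
      (∀ r ∈ Ω, (M r)ᵀ * M r = 1) ∧
      (∀ r ∈ Ω, ∀ i j : Fin m,
        ((M r)ᵀ * A r * M r) ⟨i.val, by omega⟩ ⟨j.val, by omega⟩ = B r i j) ∧
      (∀ r ∈ Ω, ∀ i j : Fin (n - m),
        ((M r)ᵀ * A r * M r) ⟨i.val + m, by omega⟩ ⟨j.val + m, by omega⟩ = L r i j) ∧
      (∀ r ∈ Ω, ∀ i j : Fin n, (i.val < m ∧ m ≤ j.val) ∨ (m ≤ i.val ∧ j.val < m) →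
        ((M r)ᵀ * A r * M r) i j = 0) ∧
      (∀ r ∈ Ω, (B r)ᵀ = B r ∧ HasOrthDiag (B r) fun i => lam r ⟨i.val, by omega⟩) ∧
      (∀ r ∈ Ω, (L r)ᵀ = L r ∧ HasOrthDiag (L r) fun j => lam r ⟨j.val + m, by omega⟩) := by
  set e := finSumFinSubEquiv hm
  obtain ⟨M, B, L, hM, hB, hL, hMM, hev⟩ := exists_contDiffAt_orthogonal_eq_fromBlocks hm hk
    (A := fun r => (A r).submatrix e e) (contDiffAt_matrix.2 fun i j => hA (e i) (e j)) hmono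
    (fun r => (heig r).submatrix e) (fun i j => hgap _ _ i.isLt (Nat.le_add_right m j))
  obtain ⟨Ω, hΩ, hΩ_open, hαΩ⟩ := eventually_nhds_iff.1
    ((hM.eventually hk').and ((hB.eventually hk').and ((hL.eventually hk').and hev)))
  choose hMΩ hBΩ hLΩ hblocks hBeig hLeig using hΩ
  set M' := fun r => (M r).submatrix e.symm e.symm
  have hentry : ∀ r ∈ Ω, ∀ i j,
      ((M' r)ᵀ * A r * M' r) i j = fromBlocks (B r) 0 0 (L r) (e.symm i) (e.symm j) := by
    intro r hr i j
    rw [transpose_submatrix_symm_mul_mul, hblocks r hr, submatrix_apply]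
  refine ⟨Ω, hΩ_open, hαΩ, M', B, L,
    fun i j r hr => (contDiffAt_matrix.1 (hMΩ r hr) _ _).contDiffWithinAt,
    fun i j r hr => (contDiffAt_matrix.1 (hBΩ r hr) i j).contDiffWithinAt,
    fun i j r hr => (contDiffAt_matrix.1 (hLΩ r hr) i j).contDiffWithinAt,
    fun r _ => by rw [transpose_submatrix, submatrix_mul_equiv, hMM, submatrix_one_equiv],
    fun r hr i j => ?_, fun r hr i j => ?_,
    fun r hr i j hij => (hentry r hr i j).trans <|
      fromBlocks_finSumFinSubEquiv_symm_eq_zero hm _ _ hij,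
    fun r hr => ⟨(hBeig r hr).transpose_eq, hBeig r hr⟩,
    fun r hr => ⟨(hLeig r hr).transpose_eq, by
      simpa only [finSumFinSubEquiv_inr] using hLeig r hr⟩⟩
  · rw [hentry r hr, ← finSumFinSubEquiv_inl hm, ← finSumFinSubEquiv_inl hm, e.symm_apply_apply,
      e.symm_apply_apply, fromBlocks_apply₁₁]
  · rw [hentry r hr, ← finSumFinSubEquiv_inr hm, ← finSumFinSubEquiv_inr hm, e.symm_apply_apply,
      e.symm_apply_apply, fromBlocks_apply₂₂]

end BlockDiagonalization

/-- existence of a C² orthogonal block diagonalization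
`Mᵀ A M = B ⊕ Λ` near a point where `λ₂ < λ₃`, with `B` carrying the eigenvalues
`λ₁, λ₂` and `Λ` the eigenvalues `λ₃, …, λₙ`. -/
theorem stmt12 {n : ℕ} (hn : 2 < n)
    (A : ℝ × ℝ → Matrix (Fin n) (Fin n) ℝ)
    (hA : ∀ i j, ContDiff ℝ 2 fun r => A r i j)
    (hAsym : ∀ r, (A r)ᵀ = A r)
    (lam : ℝ × ℝ → Fin n → ℝ)
    (hmono : ∀ r, Monotone (lam r))
    (heig : ∀ r, ∃ V : Matrix (Fin n) (Fin n) ℝ,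
      Vᵀ * V = 1 ∧ A r = V * diagonal (lam r) * Vᵀ)
    (α : ℝ × ℝ)
    (hgap : lam α ⟨1, by omega⟩ < lam α ⟨2, by omega⟩) :
    ∃ Ω : Set (ℝ × ℝ), IsOpen Ω ∧ α ∈ Ω ∧
    ∃ (M : ℝ × ℝ → Matrix (Fin n) (Fin n) ℝ)
      (B : ℝ × ℝ → Matrix (Fin 2) (Fin 2) ℝ)
      (L : ℝ × ℝ → Matrix (Fin (n - 2)) (Fin (n - 2)) ℝ),
      (∀ i j, ContDiffOn ℝ 2 (fun r => M r i j) Ω) ∧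
      (∀ i j, ContDiffOn ℝ 2 (fun r => B r i j) Ω) ∧
      (∀ i j, ContDiffOn ℝ 2 (fun r => L r i j) Ω) ∧
      (∀ r ∈ Ω, (M r)ᵀ * M r = 1) ∧
      (∀ r ∈ Ω, ∀ i j : Fin 2,
        ((M r)ᵀ * A r * M r) ⟨i.val, by have := i.isLt; omega⟩
          ⟨j.val, by have := j.isLt; omega⟩ = B r i j) ∧
      (∀ r ∈ Ω, ∀ i j : Fin (n - 2),
        ((M r)ᵀ * A r * M r) ⟨i.val + 2, by have := i.isLt; omega⟩
          ⟨j.val + 2, by have := j.isLt; omega⟩ = L r i j) ∧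
      (∀ r ∈ Ω, ∀ i j : Fin n,
        (i.val < 2 ∧ 2 ≤ j.val) ∨ (2 ≤ i.val ∧ j.val < 2) →
          ((M r)ᵀ * A r * M r) i j = 0) ∧
      (∀ r ∈ Ω, (B r)ᵀ = B r ∧ ∃ W : Matrix (Fin 2) (Fin 2) ℝ, Wᵀ * W = 1 ∧
        B r = W * diagonal ![lam r ⟨0, by omega⟩, lam r ⟨1, by omega⟩] * Wᵀ) ∧
      (∀ r ∈ Ω, (L r)ᵀ = L r ∧
        ∃ W : Matrix (Fin (n - 2)) (Fin (n - 2)) ℝ, Wᵀ * W = 1 ∧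
        L r = W * diagonal (fun j : Fin (n - 2) =>
          lam r ⟨j.val + 2, by have := j.isLt; omega⟩) * Wᵀ) := by
  have heta (r : ℝ × ℝ) : ![lam r ⟨0, by omega⟩, lam r ⟨1, by omega⟩] =
      fun i : Fin 2 => lam r ⟨i.val, by omega⟩ :=
    FinVec.etaExpand_eq (m := 2) fun i => lam r ⟨i.val, by omega⟩
  simp only [heta]
  exact stmt12_general hn.le two_ne_zero (by simp) A α (fun i j => (hA i j).contDiffAt) lam hmono
    heig fun i j hi hj =>
      (hmono α (Nat.le_of_lt_succ hi)).trans_lt (hgap.trans_le (hmono α hj))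
end
end
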